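/- arXiv:1401.3807 — 10 statements merged into one kernel-verified Lean document; each statement's English description precedes it below -/
import Mathlib

section
/- Let 1 ≤ k ≤ n and for each i ∈ {1,…,k} let R_i be a subset of {1,…,n}. Suppose that |⋃_{i∈I} R_i| ≥ n − k + |I| for every nonempty subset I ⊆ {1,…,k}. Then for every i ∈ {1,…,k} there exists a subset R′_i ⊆ R_i such that |R′_i| = n − k + 1 for all i ∈ {1,…,k}, and |⋃_{i∈I} R′_i| ≥ n − k + |I| for every nonempty subset I ⊆ {1,…,k}. (Generalized Hall's theorem; for n = k this reduces to Hall's marriage theorem.) -/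
/-!
Write `d = n - k`. As long as some `R i` has at least `d + 2` elements, one of any two of its
elements `x ≠ y` can be deleted without destroying the MDS condition (`exists_erase`); iterating
gives sets of size exactly `d + 1`, since singletons `I` force `|R i| ≥ d + 1`.

For the deletion step, suppose both deletions fail, with violating index sets `A` (for `x`) and
`B` (for `y`), both necessarily containing `i`. The unions `U`, `V` of the reduced families over
`A` and `B` satisfy `|U| ≤ d + |A| - 1` and `|V| ≤ d + |B| - 1`. However `U ∪ V` is the full union
over `A ∪ B`, because `x` survives in `V` and `y` survives in `U`, so `|U ∪ V| ≥ d + |A ∪ B|`;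
and `U ∩ V` contains both `R i \ {x, y}` and the union over `(A ∩ B) \ {i}`, so
`|U ∩ V| ≥ d + |A ∩ B| - 1`. Adding up contradicts `|U| + |V| = |U ∪ V| + |U ∩ V|`.
-/

/-- The MDS condition for a family of subsets `R i ⊆ {1,…,n}`, `i ∈ {1,…,k}`:
`|⋃_{i ∈ I} R i| ≥ n - k + |I|` for every nonempty `I ⊆ {1,…,k}`. -/
def MDSCond (n k : ℕ) (R : Fin k → Finset (Fin n)) : Prop :=
  ∀ I : Finset (Fin k), I.Nonempty → n - k + I.card ≤ (I.biUnion R).card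

/-- An index set violating the MDS condition after `R i` is replaced by `S` must contain `i`. -/
theorem mem_of_update_violates {n k : ℕ} {R : Fin k → Finset (Fin n)} (hR : MDSCond n k R)
    {i : Fin k} {S : Finset (Fin n)} {A : Finset (Fin k)} (hA : A.Nonempty)
    (h : (A.biUnion (Function.update R i S)).card < n - k + A.card) : i ∈ A := by
  by_contra hi
  have hEq : A.biUnion (Function.update R i S) = A.biUnion R := by
    refine Finset.biUnion_congr rfl fun j hj => ?_
    rw [Function.update_of_ne]
    rintro rfl
    exact hi hj
  have := hR A hA
  rw [hEq] at h
  omega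

theorem exists_erase {n k : ℕ} {R : Fin k → Finset (Fin n)} (hR : MDSCond n k R)
    {i : Fin k} (hi : n - k + 2 ≤ (R i).card) :
    ∃ x ∈ R i, MDSCond n k (Function.update R i ((R i).erase x)) := by
  obtain ⟨x, hx, y, hy, hxy⟩ := Finset.one_lt_card.1 (show 1 < (R i).card by omega)
  by_contra! hcon
  have hX := hcon x hx
  have hY := hcon y hy
  simp only [MDSCond, not_forall, not_le] at hX hY
  obtain ⟨A, hA, hAlt⟩ := hX
  obtain ⟨B, hB, hBlt⟩ := hY
  have hiA := mem_of_update_violates hR hA hAlt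
  have hiB := mem_of_update_violates hR hB hBlt
  set U := A.biUnion (Function.update R i ((R i).erase x)) with hU
  set V := B.biUnion (Function.update R i ((R i).erase y)) with hV
  have memU : ∀ z, z ∈ U ↔ (z ∈ R i ∧ z ≠ x) ∨ ∃ j ∈ A, j ≠ i ∧ z ∈ R j := by
    intro z
    simp only [hU, Finset.mem_biUnion, Function.update_apply]
    grind
  have memV : ∀ z, z ∈ V ↔ (z ∈ R i ∧ z ≠ y) ∨ ∃ j ∈ B, j ≠ i ∧ z ∈ R j := by
    intro z
    simp only [hV, Finset.mem_biUnion, Function.update_apply]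
    grind
  have hunion : n - k + (A ∪ B).card ≤ (U ∪ V).card := by
    refine (hR (A ∪ B) (hA.mono Finset.subset_union_left)).trans (Finset.card_le_card ?_)
    intro z hz
    simp only [Finset.mem_biUnion, Finset.mem_union] at hz
    rw [Finset.mem_union, memU, memV]
    grind
  have hinter : n - k + (A ∩ B).card ≤ (U ∩ V).card + 1 := by
    have hiAB : i ∈ A ∩ B := Finset.mem_inter.2 ⟨hiA, hiB⟩
    have hcard := Finset.card_erase_add_one hiAB
    rcases ((A ∩ B).erase i).eq_empty_or_nonempty with he | hne
    -- `A ∩ B = {i}`: here the size of `R i` is what is used.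
    · rw [he, Finset.card_empty] at hcard
      have hsub : ((R i).erase x).erase y ⊆ U ∩ V := by
        intro z hz
        simp only [Finset.mem_erase] at hz
        rw [Finset.mem_inter, memU, memV]
        tauto
      have h1 := Finset.card_le_card hsub
      have h2 := Finset.card_erase_add_one hx
      have h3 := Finset.card_erase_add_one (Finset.mem_erase.2 ⟨hxy.symm, hy⟩)
      omega
    · have hsub : ((A ∩ B).erase i).biUnion R ⊆ U ∩ V := by
        intro z hz
        simp only [Finset.mem_biUnion, Finset.mem_erase, Finset.mem_inter] at hz
        rw [Finset.mem_inter, memU, memV]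
        grind
      have h1 := Finset.card_le_card hsub
      have h2 := hR _ hne
      omega
  have h1 := Finset.card_union_add_card_inter U V
  have h2 := Finset.card_union_add_card_inter A B
  omega

/-- Generalized Hall's theorem. -/
theorem generalized_hall (n k : ℕ) (hk : 1 ≤ k) (hkn : k ≤ n)
    (R : Fin k → Finset (Fin n)) (hMDS : MDSCond n k R) :
    ∃ R' : Fin k → Finset (Fin n),
      (∀ i, R' i ⊆ R i) ∧ (∀ i, (R' i).card = n - k + 1) ∧ MDSCond n k R' := by
  induction hs : ∑ i, (R i).card using Nat.strong_induction_on generalizing R with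
  | _ s ih =>
    by_cases h : ∃ i, n - k + 2 ≤ (R i).card
    · obtain ⟨i, hi⟩ := h
      obtain ⟨x, hx, hMDS'⟩ := exists_erase hMDS hi
      have hsub : ∀ j, Function.update R i ((R i).erase x) j ⊆ R j := by
        intro j
        rw [Function.update_apply]
        split_ifs with hj
        · subst hj
          exact Finset.erase_subset _ _
        · exact subset_rfl
      have hlt : ∑ j, (Function.update R i ((R i).erase x) j).card < s := by
        rw [← hs]
        refine Finset.sum_lt_sum (fun j _ => Finset.card_le_card (hsub j))
          ⟨i, Finset.mem_univ i, ?_⟩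
        rw [Function.update_self]
        exact Finset.card_erase_lt_of_mem hx
      obtain ⟨R', hR', hcard, hM⟩ := ih _ hlt _ hMDS' rfl
      exact ⟨R', fun j => (hR' j).trans (hsub j), hcard, hM⟩
    · push Not at h
      refine ⟨R, fun _ => subset_rfl, fun i => ?_, hMDS⟩
      have h1 := hMDS {i} (Finset.singleton_nonempty i)
      rw [Finset.singleton_biUnion, Finset.card_singleton] at h1
      have h2 := h i
      omega
end

section
/- Let 1 ≤ k ≤ n and let R_1,…,R_k be subsets of {1,…,n} satisfying the MDS condition. Suppose r ∈ {1,…,k} is such that |R_r| ≥ n − k + 2, and let a and b be two distinct elements of R_r. Then it is impossible that both reduced families violate the MDS condition; that is, either the family obtained from R_1,…,R_k by replacing R_r with R_r \ {a} satisfies the MDS condition, or the family obtained by replacing R_r with R_r \ {b} satisfies the MDS condition. -/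
/-- A violation of the MDS condition created by shrinking `R r` occurs at an index set
`insert r I` with `r ∉ I`. -/
lemma exists_violation_of_not_mds {n k : ℕ} {R : Fin k → Finset (Fin n)} (hMDS : MDSCond n k R)
    {r : Fin k} {S : Finset (Fin n)} (h : ¬ MDSCond n k (Function.update R r S)) :
    ∃ I : Finset (Fin k), r ∉ I ∧ (I.biUnion R ∪ S).card ≤ n - k + I.card := by
  unfold MDSCond at h
  push Not at h
  obtain ⟨I, hI, hlt⟩ := h
  have hcongr : ∀ J : Finset (Fin k), r ∉ J →
      J.biUnion (Function.update R r S) = J.biUnion R := fun J hJ =>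
    Finset.biUnion_congr rfl fun i hi =>
      Function.update_of_ne (ne_of_mem_of_not_mem hi hJ) _ _
  by_cases hrI : r ∈ I
  · refine ⟨I.erase r, Finset.notMem_erase r I, ?_⟩
    have hcard := Finset.card_erase_add_one hrI
    rw [← Finset.insert_erase hrI, Finset.biUnion_insert, Function.update_self,
      hcongr _ (Finset.notMem_erase r I), Finset.insert_erase hrI, Finset.union_comm] at hlt
    omega
  · rw [hcongr I hrI] at hlt
    exact absurd (hMDS I hI) (not_le.mpr hlt)

/-- If `|R r| ≥ n - k + 2` and `a ≠ b` are two elements of `R r`, then removing `a` from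
`R r` or removing `b` from `R r` preserves the MDS condition (at least one of the two). -/
theorem remove_one_of_two_preserves_mds (n k : ℕ) (hk : 1 ≤ k) (hkn : k ≤ n)
    (R : Fin k → Finset (Fin n)) (hMDS : MDSCond n k R)
    (r : Fin k) (hr : n - k + 2 ≤ (R r).card)
    (a b : Fin n) (ha : a ∈ R r) (hb : b ∈ R r) (hab : a ≠ b) :
    MDSCond n k (Function.update R r (R r \ {a})) ∨
    MDSCond n k (Function.update R r (R r \ {b})) := by
  by_contra hcon
  rw [not_or] at hcon
  obtain ⟨I, hrI, hI⟩ := exists_violation_of_not_mds hMDS hcon.1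
  obtain ⟨J, hrJ, hJ⟩ := exists_violation_of_not_mds hMDS hcon.2
  set A := I.biUnion R ∪ R r \ {a}
  set B := J.biUnion R ∪ R r \ {b}
  have hunion : n - k + ((I ∪ J).card + 1) ≤ (A ∪ B).card := by
    have hr' : r ∉ I ∪ J := by simp [hrI, hrJ]
    have h := hMDS (insert r (I ∪ J)) (Finset.insert_nonempty _ _)
    rw [Finset.card_insert_of_notMem hr'] at h
    refine h.trans (Finset.card_le_card fun x hx => ?_)
    simp only [Finset.mem_biUnion, Finset.mem_insert, Finset.mem_union] at hx
    obtain ⟨i, rfl | hi | hi, hx⟩ := hx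
    · by_cases hxa : x = a
      · have hxb : x ≠ b := hxa ▸ hab
        simp [A, B, hx, hxb]
      · simp [A, B, hx, hxa]
    · exact Finset.mem_union_left _ (Finset.mem_union_left _ (Finset.mem_biUnion.mpr ⟨i, hi, hx⟩))
    · exact Finset.mem_union_right _ (Finset.mem_union_left _ (Finset.mem_biUnion.mpr ⟨i, hi, hx⟩))
  have hinter : n - k + (I ∩ J).card ≤ (A ∩ B).card := by
    rcases (I ∩ J).eq_empty_or_nonempty with he | hne
    · have hsub : R r \ {a, b} ⊆ A ∩ B := by
        intro x hx
        simp only [Finset.mem_sdiff, Finset.mem_insert, Finset.mem_singleton, not_or] at hx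
        simp [A, B, hx]
      have h1 := Finset.card_le_card hsub
      have h2 := Finset.le_card_sdiff {a, b} (R r)
      rw [Finset.card_pair hab] at h2
      rw [he, Finset.card_empty]
      omega
    · refine (hMDS _ hne).trans (Finset.card_le_card (Finset.subset_inter ?_ ?_))
      · exact (Finset.biUnion_subset_biUnion_of_subset_left R Finset.inter_subset_left).trans
          Finset.subset_union_left
      · exact (Finset.biUnion_subset_biUnion_of_subset_left R Finset.inter_subset_right).trans
          Finset.subset_union_left
  have h1 := Finset.card_union_add_card_inter A B
  have h2 := Finset.card_union_add_card_inter I J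
  omega
end

section
/- Let F(X_1,…,X_n) = det(A) · ∏_{1 ≤ j < i ≤ n} (X_i − X_j), a polynomial in the indeterminates X_1,…,X_n. Then for every t ∈ {1,…,n}, the degree of F in the variable X_t is at most n + k − 2. -/
/-!
The bound splits as `(k - 1) + (n - 1)`.

* Each entry of `coeffMatrix` is, up to sign, an elementary symmetric polynomial in distinct
  variables, so it has degree at most `1` in `X_t`. Since each `f_i` is monic of degree `k - 1`,
  the last column is constantly `1`. Every term of the Leibniz expansion therefore has degree at
  most `k - 1` in `X_t` (`degreeOf_det_coeffMatrix_le`).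
* `X_t` occurs, linearly, in exactly `n - 1` of the factors of the Vandermonde product
  (`degreeOf_vandermonde_le`).
-/

open Polynomial MvPolynomial

/-- The coefficient matrix `A = (a_{i,j})` where
`f_i(x) = ∏_{t ∈ Z i} (x - X_t) = ∑_{j=1}^k a_{i,j} x^{j-1}`
(with `0`-based index `j`, `a i j` is the coefficient of `x^j` in `f i`). -/
noncomputable def coeffMatrix (F : Type*) [Field F] (n k : ℕ)
    (Z : Fin k → Finset (Fin n)) : Matrix (Fin k) (Fin k) (MvPolynomial (Fin n) F) :=
  Matrix.of fun i j =>
    (∏ t ∈ Z i, (Polynomial.X - Polynomial.C (MvPolynomial.X t) :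
        Polynomial (MvPolynomial (Fin n) F))).coeff (j : ℕ)

/-- The coefficients of `∏_{s ∈ S} (x - X_s)` are multiaffine, and involve only the variables
indexed by `S`. -/
lemma degreeOf_coeff_prod_le {F : Type*} [Field F] {n : ℕ} (t : Fin n) (S : Finset (Fin n))
    (j : ℕ) :
    MvPolynomial.degreeOf t ((∏ s ∈ S, (Polynomial.X - Polynomial.C (MvPolynomial.X s) :
        Polynomial (MvPolynomial (Fin n) F))).coeff j) ≤ if t ∈ S then 1 else 0 := by
  induction S using Finset.induction_on generalizing j with
  | empty =>
    rw [Finset.prod_empty, Polynomial.coeff_one]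
    split_ifs <;> simp
  | insert a S ha ih =>
    rw [Finset.prod_insert ha, sub_mul, Polynomial.coeff_sub, Polynomial.coeff_C_mul]
    refine (MvPolynomial.degreeOf_sub_le _ _ _).trans (max_le ?_ ?_)
    · have hmono : (if t ∈ S then 1 else 0) ≤ if t ∈ insert a S then 1 else 0 := by
        simp only [Finset.mem_insert]
        split_ifs <;> simp_all
      cases j with
      | zero => simp
      | succ j =>
        rw [Polynomial.coeff_X_mul]
        exact (ih j).trans hmono
    · refine (MvPolynomial.degreeOf_mul_le _ _ _).trans ?_
      have h := ih j
      rw [MvPolynomial.degreeOf_X]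
      simp only [Finset.mem_insert]
      by_cases hta : t = a
      · subst hta
        simp_all
      · simpa [hta] using h

lemma coeffMatrix_last_column {F : Type*} [Field F] {n k : ℕ}
    (Z : Fin k → Finset (Fin n)) (hZ : ∀ i, (Z i).card = k - 1) (i j : Fin k)
    (hj : (j : ℕ) = k - 1) : coeffMatrix F n k Z i j = 1 := by
  have hdeg := Polynomial.natDegree_finsetProd_X_sub_C_eq_card (Z i)
    (fun s => (MvPolynomial.X s : MvPolynomial (Fin n) F))
  have hmonic := Polynomial.monic_prod_X_sub_C
    (fun s => (MvPolynomial.X s : MvPolynomial (Fin n) F)) (Z i)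
  rw [Polynomial.Monic, Polynomial.leadingCoeff, hdeg, hZ i] at hmonic
  rw [coeffMatrix, Matrix.of_apply, hj, hmonic]

lemma degreeOf_det_coeffMatrix_le {F : Type*} [Field F] {n k : ℕ} (hk : 1 ≤ k)
    (Z : Fin k → Finset (Fin n)) (hZ : ∀ i, (Z i).card = k - 1) (t : Fin n) :
    MvPolynomial.degreeOf t (coeffMatrix F n k Z).det ≤ k - 1 := by
  rw [Matrix.det_apply']
  refine (MvPolynomial.degreeOf_sum_le _ _ _).trans (Finset.sup_le fun σ _ => ?_)
  refine (MvPolynomial.degreeOf_mul_le _ _ _).trans ?_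
  have hsign : MvPolynomial.degreeOf t
      (((Equiv.Perm.sign σ : ℤˣ) : ℤ) : MvPolynomial (Fin n) F) = 0 := by
    rw [← map_intCast (MvPolynomial.C (σ := Fin n) (R := F)), MvPolynomial.degreeOf_C]
  rw [hsign, zero_add]
  refine (MvPolynomial.degreeOf_prod_le _ _ _).trans ?_
  obtain ⟨m, rfl⟩ : ∃ m, k = m + 1 := ⟨k - 1, by omega⟩
  rw [Fin.sum_univ_castSucc, coeffMatrix_last_column Z hZ _ (Fin.last m) (by simp),
    MvPolynomial.degreeOf_one, add_zero]
  refine (Finset.sum_le_card_nsmul _ _ 1 fun i _ => ?_).trans (by simp)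
  refine (degreeOf_coeff_prod_le t _ _).trans ?_
  split_ifs <;> simp

lemma degreeOf_vandermonde_le {F : Type*} [Field F] {n : ℕ} (t : Fin n) :
    MvPolynomial.degreeOf t (∏ i : Fin n, ∏ j ∈ Finset.univ.filter (· < i),
      (MvPolynomial.X i - MvPolynomial.X j : MvPolynomial (Fin n) F)) ≤ n - 1 := by
  have hfactor (i j : Fin n) : MvPolynomial.degreeOf t
      (MvPolynomial.X i - MvPolynomial.X j : MvPolynomial (Fin n) F) ≤
      (if t = i then 1 else 0) + (if t = j then 1 else 0) := by
    refine (MvPolynomial.degreeOf_sub_le _ _ _).trans ?_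
    rw [MvPolynomial.degreeOf_X, MvPolynomial.degreeOf_X]
    exact max_le (Nat.le_add_right _ _) (Nat.le_add_left _ _)
  refine (MvPolynomial.degreeOf_prod_le _ _ _).trans ?_
  -- The `i`-th row of factors involves `X_t` in `t` factors if `i = t`, in one factor if `t < i`,
  -- and in none otherwise.
  have hrow (i : Fin n) : MvPolynomial.degreeOf t (∏ j ∈ Finset.univ.filter (· < i),
      (MvPolynomial.X i - MvPolynomial.X j : MvPolynomial (Fin n) F)) ≤
      (if t = i then (t : ℕ) else 0) + (if t < i then 1 else 0) := by
    refine (MvPolynomial.degreeOf_prod_le _ _ _).trans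
      ((Finset.sum_le_sum fun j _ => hfactor i j).trans ?_)
    rw [Finset.sum_add_distrib]
    refine add_le_add ?_ ?_
    · by_cases h : t = i
      · subst h
        simp [Finset.filter_gt_eq_Iio]
      · simp [h]
    · simp [Finset.sum_ite_eq]
  refine (Finset.sum_le_sum fun i _ => hrow i).trans ?_
  rw [Finset.sum_add_distrib, Finset.sum_ite_eq, ← Finset.card_filter]
  have hcard : (Finset.univ.filter (fun i => t < i)).card = n - 1 - t := by
    rw [Finset.filter_lt_eq_Ioi, Fin.card_Ioi]
  rw [hcard]
  have := t.isLt
  simp only [Finset.mem_univ, if_true]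
  omega

/-- The degree of `F(X_1,…,X_n) = det A ⋅ ∏_{j < i} (X_i - X_j)` in each variable `X_t`
is at most `n + k - 2`. -/
theorem degreeOf_det_mul_vandermonde_le (F : Type*) [Field F] (n k : ℕ)
    (hk : 1 ≤ k) (hkn : k ≤ n)
    (Z : Fin k → Finset (Fin n)) (hZ : ∀ i, (Z i).card = k - 1) (t : Fin n) :
    MvPolynomial.degreeOf t
      ((coeffMatrix F n k Z).det *
        ∏ i : Fin n, ∏ j ∈ Finset.univ.filter (· < i),
          (MvPolynomial.X i - MvPolynomial.X j)) ≤ n + k - 2 := by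
  refine (MvPolynomial.degreeOf_mul_le _ _ _).trans ?_
  have h1 := degreeOf_det_coeffMatrix_le (F := F) hk Z hZ t
  have h2 := degreeOf_vandermonde_le (F := F) t
  omega
end

section
/- Suppose there exists a choice (σ, (S_1,…,S_k)) whose value is unique, i.e., every choice (σ′, (S′_1,…,S′_k)) whose value equals the multiset S_1 ⊎ ⋯ ⊎ S_k satisfies σ′ = σ and S′_i = S_i for all i. Then det(A) is not the zero polynomial. -/
/-!
The entry `a_{i,j}` is, up to sign, the sum of the squarefree monomials `∏_{t ∈ S} X_t` over the
subsets `S ⊆ Z_i` of size `k - 1 - j`. Expanding the products in the Leibniz formula, the determinant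
becomes a signed sum of monomials indexed by choices, where the Leibniz term of `τ` contributes
the choices with permutation `i ↦ k - 1 - τ(i)` (indices from `0`), and the
monomial of a choice records exactly its value. A choice with unique value therefore contributes
a monomial that nothing else can cancel: its coefficient in the determinant is `±1`. The expansion of a Leibniz term is `prod_coeffMatrix`.
-/

open Polynomial MvPolynomial

/-- A choice for the family `Z`: a permutation `σ` of `{1,…,k}` together with subsets
`S i ⊆ Z i` of cardinality `σ(i) - 1` (here `(σ i : ℕ)`, with `0`-based indexing). -/
def IsChoice (n k : ℕ) (Z : Fin k → Finset (Fin n))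
    (σ : Equiv.Perm (Fin k)) (S : Fin k → Finset (Fin n)) : Prop :=
  ∀ i, S i ⊆ Z i ∧ (S i).card = (σ i : ℕ)

/-- The value of a choice: the multiset union `S 1 ⊎ ⋯ ⊎ S k`. -/
def choiceValue (n k : ℕ) (S : Fin k → Finset (Fin n)) : Multiset (Fin n) :=
  ∑ i : Fin k, (S i).val

lemma coeffMatrix_apply (F : Type*) [Field F] (n k : ℕ)
    (Z : Fin k → Finset (Fin n)) (hZ : ∀ i, (Z i).card = k - 1) (i j : Fin k) :
    coeffMatrix F n k Z i j = (-1) ^ (j.rev : ℕ) *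
      ∑ s ∈ (Z i).powersetCard (j.rev : ℕ), ∏ t ∈ s, MvPolynomial.X t := by
  have hj : (j.rev : ℕ) = k - 1 - j := by rw [Fin.val_rev]; omega
  have hcard : Multiset.card ((Z i).val.map (fun t => (MvPolynomial.X t : MvPolynomial (Fin n) F)))
      = k - 1 := by simp [hZ]
  have h := Multiset.prod_X_sub_C_coeff
    ((Z i).val.map (fun t => (MvPolynomial.X t : MvPolynomial (Fin n) F))) (k := j)
    (by rw [hcard]; omega)
  rw [hcard, Finset.esymm_map_val, ← hj, Multiset.map_map] at h
  exact h

/-- The monomial of a family of subsets, with exponent vector given by its value. -/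
lemma prod_prod_X (F : Type*) [Field F] (n k : ℕ) (S : Fin k → Finset (Fin n)) :
    ∏ i, ∏ t ∈ S i, (MvPolynomial.X t : MvPolynomial (Fin n) F) =
      MvPolynomial.monomial (Multiset.toFinsupp (choiceValue n k S)) 1 := by
  have h (s : Multiset (Fin n)) : (s.map fun t => (MvPolynomial.X t : MvPolynomial (Fin n) F)).prod
      = MvPolynomial.monomial (Multiset.toFinsupp s) 1 := by
    induction s using Multiset.induction_on with
    | empty => simp
    | cons a s ih =>
      rw [Multiset.map_cons, Multiset.prod_cons, ih, ← Multiset.singleton_add, map_add,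
        Multiset.toFinsupp_singleton, MvPolynomial.X, MvPolynomial.monomial_mul, one_mul]
  rw [choiceValue, map_sum, MvPolynomial.monomial_sum_one]
  exact Finset.prod_congr rfl fun i _ => h (S i).val

/-- A Leibniz term of the determinant is, up to sign, the sum of the monomials of the choices
with the reversed permutation. -/
lemma prod_coeffMatrix (F : Type*) [Field F] (n k : ℕ)
    (Z : Fin k → Finset (Fin n)) (hZ : ∀ i, (Z i).card = k - 1) (τ : Equiv.Perm (Fin k)) :
    ∏ i, coeffMatrix F n k Z i (τ i) = MvPolynomial.C (∏ i, (-1) ^ ((τ i).rev : ℕ)) *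
      ∑ S ∈ Fintype.piFinset fun i => (Z i).powersetCard ((τ i).rev : ℕ),
        MvPolynomial.monomial (Multiset.toFinsupp (choiceValue n k S)) 1 := by
  simp_rw [coeffMatrix_apply F n k Z hZ, Finset.prod_mul_distrib, Finset.prod_univ_sum,
    prod_prod_X]
  simp

lemma isChoice_of_mem_piFinset {n k : ℕ} {Z S : Fin k → Finset (Fin n)} {τ : Equiv.Perm (Fin k)}
    (h : S ∈ Fintype.piFinset fun i => (Z i).powersetCard ((τ i).rev : ℕ)) :
    IsChoice n k Z (τ.trans Fin.revPerm) S := by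
  intro i
  simpa [Finset.mem_powersetCard] using Fintype.mem_piFinset.1 h i

/-- If some choice has a unique value among all choices, then `det A ≠ 0`. -/
theorem det_ne_zero_of_unique_multiset (F : Type*) [Field F] (n k : ℕ)
    (hk : 1 ≤ k) (hkn : k ≤ n)
    (Z : Fin k → Finset (Fin n)) (hZ : ∀ i, (Z i).card = k - 1)
    (huniq : ∃ (σ : Equiv.Perm (Fin k)) (S : Fin k → Finset (Fin n)),
      IsChoice n k Z σ S ∧
      ∀ (σ' : Equiv.Perm (Fin k)) (S' : Fin k → Finset (Fin n)),
        IsChoice n k Z σ' S' → choiceValue n k S' = choiceValue n k S →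
          σ' = σ ∧ S' = S) :
    (coeffMatrix F n k Z).det ≠ 0 := by
  classical
  obtain ⟨σ, S, hS, huniq⟩ := huniq
  intro h0
  have hc := congrArg (MvPolynomial.coeff (Multiset.toFinsupp (choiceValue n k S))) h0
  rw [← Matrix.det_transpose, Matrix.det_apply', MvPolynomial.coeff_sum, MvPolynomial.coeff_zero,
    -- the only Leibniz term containing this monomial is the one of the reversal of `σ`
    Finset.sum_eq_single (σ.trans Fin.revPerm)] at hc
  · simp_rw [Matrix.transpose_apply, prod_coeffMatrix F n k Z hZ] at hc
    rw [← map_intCast (MvPolynomial.C (σ := Fin n) (R := F)), MvPolynomial.coeff_C_mul,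
      MvPolynomial.coeff_C_mul, MvPolynomial.coeff_sum, Finset.sum_eq_single S] at hc
    · rw [MvPolynomial.coeff_monomial, if_pos rfl, mul_one] at hc
      rcases mul_eq_zero.1 hc with h | h
      · rcases Int.units_eq_one_or (Equiv.Perm.sign (σ.trans Fin.revPerm)) with h' | h' <;>
          rw [h'] at h <;> simp at h
      · rw [Finset.prod_eq_zero_iff] at h
        obtain ⟨i, -, hi⟩ := h
        exact pow_ne_zero _ (neg_ne_zero.2 one_ne_zero) hi
    · intro S' hS' hne
      rw [MvPolynomial.coeff_monomial, if_neg]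
      intro he
      exact hne (huniq _ S' (isChoice_of_mem_piFinset hS') (Multiset.toFinsupp.injective he)).2
    · intro hn
      refine absurd (Fintype.mem_piFinset.2 fun i => ?_) hn
      simpa [Finset.mem_powersetCard] using hS i
  · intro τ _ hne
    simp_rw [Matrix.transpose_apply, prod_coeffMatrix F n k Z hZ]
    rw [← map_intCast (MvPolynomial.C (σ := Fin n) (R := F)), MvPolynomial.coeff_C_mul,
      MvPolynomial.coeff_C_mul, MvPolynomial.coeff_sum, Finset.sum_eq_zero, mul_zero, mul_zero]
    intro S' hS'
    rw [MvPolynomial.coeff_monomial, if_neg]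
    intro he
    apply hne
    rw [← (huniq _ S' (isChoice_of_mem_piFinset hS') (Multiset.toFinsupp.injective he)).1]
    ext i
    simp
  · simp
end

section
/- Let 1 ≤ k ≤ n and let Z_1,…,Z_k be (k−1)-element subsets of {1,…,n} satisfying |⋂_{i∈I} Z_i| ≤ k − |I| for every nonempty subset I ⊆ {1,…,k}, and additionally satisfying |Z_i ∩ Z_{i′}| ≤ 1 for all i ≠ i′. Then there exists a choice (σ, (S_1,…,S_k)) whose value is unique among all choices: every choice (σ′, (S′_1,…,S′_k)) whose value equals the multiset S_1 ⊎ ⋯ ⊎ S_k satisfies σ′ = σ and S′_i = S_i for all i. -/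
namespace UniqueMultiset

/-! ### Choices on a finite set of indices -/

set_option linter.unusedSectionVars false

variable {ι α : Type*} [DecidableEq ι] [DecidableEq α]

/-- A choice for `Z` on the index set `V`: subsets `S i ⊆ Z i` of pairwise distinct cardinalities.
When all `Z i` have `V.card - 1` elements the cardinalities are then exactly `0, …, V.card - 1`,
so the permutation need not be carried along. -/
def IsCh (V : Finset ι) (Z S : ι → Finset α) : Prop :=
  (∀ i ∈ V, S i ⊆ Z i) ∧ Set.InjOn (fun i => (S i).card) (V : Set ι)

/-- The multiset union of the sets `S i`, `i ∈ V`. -/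
def val (V : Finset ι) (S : ι → Finset α) : Multiset α := ∑ i ∈ V, (S i).val

/-- `S` is a choice on `V`, and on `V` it is determined by its value. -/
def IsUniq (V : Finset ι) (Z S : ι → Finset α) : Prop :=
  IsCh V Z S ∧ ∀ S', IsCh V Z S' → val V S' = val V S → ∀ i ∈ V, S' i = S i

lemma count_val (V : Finset ι) (S : ι → Finset α) (x : α) :
    (val V S).count x = (V.filter (fun i => x ∈ S i)).card := by
  unfold val
  rw [Multiset.count_sum', Finset.card_filter]
  refine Finset.sum_congr rfl fun i _ => ?_
  rw [Multiset.count_eq_of_nodup (S i).nodup]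
  simp

/-- If two choices have the same value and every index using `x` in `S'` also uses it in `S`, then
`x` is used by the same indices in both. It is applied with `x` used by nobody in `S`, and with `x`
used in `S` by everybody who could use it in `S'`. -/
lemma mem_of_val_eq {V : Finset ι} {S S' : ι → Finset α} (h : val V S' = val V S) {x : α}
    (hx : ∀ i ∈ V, x ∈ S' i → x ∈ S i) : ∀ i ∈ V, x ∈ S i → x ∈ S' i := by
  have hc : (V.filter (fun i => x ∈ S i)).card ≤ (V.filter (fun i => x ∈ S' i)).card := by
    rw [← count_val, ← count_val, h]
  have hs : V.filter (fun i => x ∈ S' i) ⊆ V.filter (fun i => x ∈ S i) := by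
    intro i hi
    simp only [Finset.mem_filter] at hi ⊢
    exact ⟨hi.1, hx i hi.1 hi.2⟩
  have he := Finset.eq_of_subset_of_card_le hs hc
  intro i hi hxi
  have : i ∈ V.filter (fun i => x ∈ S' i) := by rw [he]; simp [hi, hxi]
  exact (Finset.mem_filter.1 this).2

lemma exists_card_eq {V : Finset ι} {S : ι → Finset α}
    (hinj : Set.InjOn (fun i => (S i).card) (V : Set ι)) (hlt : ∀ i ∈ V, (S i).card < V.card)
    {v : ℕ} (hv : v < V.card) : ∃ i ∈ V, (S i).card = v := by
  have h1 : V.image (fun i => (S i).card) = Finset.range V.card := by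
    apply Finset.eq_of_subset_of_card_le
    · intro y hy
      obtain ⟨i, hi, rfl⟩ := Finset.mem_image.1 hy
      exact Finset.mem_range.2 (hlt i hi)
    · rw [Finset.card_image_of_injOn hinj, Finset.card_range]
  have h2 : v ∈ V.image (fun i => (S i).card) := by rw [h1]; exact Finset.mem_range.2 hv
  simpa using h2

/-- Passing to complements inside `Z i` preserves uniqueness and exchanges `∅` with `Z i`. -/
lemma IsUniq.compl {V : Finset ι} {Z S : ι → Finset α} {c : ℕ} (hZ : ∀ i ∈ V, (Z i).card = c)
    (h : IsUniq V Z S) : IsUniq V Z (fun i => Z i \ S i) := by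
  have key : ∀ T, IsCh V Z T → IsCh V Z (fun i => Z i \ T i) := by
    intro T hT
    refine ⟨fun i _ => Finset.sdiff_subset, ?_⟩
    intro i hi j hj hij
    have hi' := Finset.card_sdiff_add_card_eq_card (hT.1 i hi)
    have hj' := Finset.card_sdiff_add_card_eq_card (hT.1 j hj)
    have e1 := hZ i hi
    have e2 := hZ j hj
    apply hT.2 hi hj
    simp only at hij ⊢
    omega
  have hval : ∀ T, IsCh V Z T → val V (fun i => Z i \ T i) + val V T = val V Z := by
    intro T hT
    unfold val
    rw [← Finset.sum_add_distrib]
    refine Finset.sum_congr rfl fun i hi => ?_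
    rw [Finset.sdiff_val, tsub_add_cancel_of_le (Finset.val_le_iff.2 (hT.1 i hi))]
  refine ⟨key S h.1, fun S' hS' he i hi => ?_⟩
  have h1 := h.2 _ (key S' hS') (by
    have a := hval S' hS'
    have b := hval S h.1
    rw [he, add_comm] at a
    exact add_left_cancel (a.trans b.symm)) i hi
  simp only at h1 ⊢
  rw [← h1, Finset.sdiff_sdiff_eq_self (hS'.1 i hi)]

/-! ### Removing two indices -/

/-- Data for removing the indices `A` and `B`, where `A` is to receive all of `Z A` and `B` is to
receive `∅`. Every remaining index `i ∈ V` has an element `t i` to be taken and an element `d i` to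
be dropped, which together contain everything `Z i` shares with `Z A` and `Z B`. An element of
`Z A` is always `t i` and an element of `Z B \ Z A` is always `d i`. An element taken (dropped) at
one index is taken (dropped) at every index of `V` whose set contains it. The exceptional indices,
whose sets contain a common element of `Z A` and `Z B`, are the ones with `t i ∈ Z B`; there `d i`
lies in no other `Z j` with `j ∈ V`. -/
structure StepData (V : Finset ι) (Z : ι → Finset α) (A B : ι) (t d : ι → α) : Prop where
  t_mem : ∀ i ∈ V, t i ∈ Z i
  d_mem : ∀ i ∈ V, d i ∈ Z i
  ne : ∀ i ∈ V, t i ≠ d i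
  left : ∀ i ∈ V, ∀ x ∈ Z i, x ∈ Z A → x = t i ∨ x = d i
  right : ∀ i ∈ V, ∀ x ∈ Z i, x ∈ Z B → x = t i ∨ x = d i
  d_notMem : ∀ i ∈ V, d i ∉ Z A
  d_eq : ∀ i ∈ V, ∀ j ∈ V, d i ∈ Z j → d j = d i
  t_both : ∀ i ∈ V, t i ∈ Z B → t i ∈ Z A
  t_eq : ∀ i ∈ V, ∀ j ∈ V, t i ∈ Z j → t j = t i
  d_private : ∀ i ∈ V, t i ∈ Z B → ∀ j ∈ V, d i ∈ Z j → j = i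

/-- What remains of `Z i` once its taken and its dropped element are removed. -/
def residual (Z : ι → Finset α) (t d : ι → α) (i : ι) : Finset α := Z i \ {t i, d i}

lemma val_insert₂ {V : Finset ι} {A B : ι} (hA : A ∉ V) (hB : B ∉ V) (hAB : A ≠ B)
    (S : ι → Finset α) :
    val (insert A (insert B V)) S = (S A).val + ((S B).val + val V S) := by
  unfold val
  rw [Finset.sum_insert (by simp [hA, hAB]), Finset.sum_insert hB]

/-- A unique choice `R` for the residual family extends to a unique choice: `A` receives `Z A`, `B`
receives `∅`, and every other `i` receives `R i` together with `t i`. The condition `h0` says that no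
exceptional index receives `∅` in `R`; otherwise that index and `B` could exchange roles. -/
lemma step {V : Finset ι} {Z : ι → Finset α} {A B : ι} {t d : ι → α}
    (hA : A ∉ V) (hB : B ∉ V) (hAB : A ≠ B)
    (hZ : ∀ i ∈ insert A (insert B V), (Z i).card = V.card + 1)
    (h1 : (Z A ∩ Z B).card ≤ 1) (hlt : (Z A ∩ Z B).card < V.card + 1)
    (D : StepData V Z A B t d) {R : ι → Finset α} (hR : IsUniq V (residual Z t d) R)
    (h0 : ∀ i ∈ V, t i ∈ Z B → R i ≠ ∅) :
    ∃ S, IsUniq (insert A (insert B V)) Z S ∧ S A = Z A ∧ S B = ∅ := by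
  classical
  set U := insert A (insert B V) with hU
  have hUc : U.card = V.card + 2 := by
    rw [hU, Finset.card_insert_of_notMem (by simp [hA, hAB]), Finset.card_insert_of_notMem hB]
  have hAU : A ∈ U := by simp [hU]
  have hBU : B ∈ U := by simp [hU]
  have hVU : ∀ i ∈ V, i ∈ U := fun i hi => by simp [hU, hi]
  have neA : ∀ i ∈ V, i ≠ A := fun i hi e => hA (e ▸ hi)
  have neB : ∀ i ∈ V, i ≠ B := fun i hi e => hB (e ▸ hi)
  have hRes : ∀ i ∈ V, ∀ x, x ∈ residual Z t d i ↔ x ∈ Z i ∧ x ≠ t i ∧ x ≠ d i := by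
    intro i _ x; simp [residual]
  have hResc : ∀ i ∈ V, (residual Z t d i).card + 1 = V.card := by
    intro i hi
    have := Finset.card_sdiff_add_card_eq_card (s := {t i, d i}) (t := Z i)
      (by intro x; simp; rintro (rfl | rfl); exacts [D.t_mem i hi, D.d_mem i hi])
    rw [Finset.card_pair (D.ne i hi), hZ i (hVU i hi)] at this
    unfold residual; omega
  have hRmem : ∀ i ∈ V, ∀ x ∈ R i, x ∈ Z i ∧ x ≠ t i ∧ x ≠ d i :=
    fun i hi x hx => (hRes i hi x).1 (hR.1.1 i hi hx)
  have htR : ∀ i ∈ V, t i ∉ R i := fun i hi h => (hRmem i hi _ h).2.1 rfl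
  let S : ι → Finset α := fun i => if i = A then Z A else if i = B then ∅ else insert (t i) (R i)
  have SA : S A = Z A := by simp [S]
  have SB : S B = ∅ := by simp [S, hAB.symm]
  have SV : ∀ i ∈ V, S i = insert (t i) (R i) := fun i hi => by simp [S, neA i hi, neB i hi]
  have SVc : ∀ i ∈ V, (S i).card = (R i).card + 1 := fun i hi => by
    rw [SV i hi, Finset.card_insert_of_notMem (htR i hi)]
  have hRc : ∀ i ∈ V, (R i).card + 1 ≤ V.card := fun i hi => by
    have := Finset.card_le_card (hR.1.1 i hi); have := hResc i hi; omega
  have Scho : IsCh U Z S := by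
    constructor
    · intro i hi
      rcases Finset.mem_insert.1 hi with rfl | hi
      · rw [SA]
      rcases Finset.mem_insert.1 hi with rfl | hi
      · rw [SB]; simp
      · rw [SV i hi]
        intro x hx
        rcases Finset.mem_insert.1 hx with rfl | hx
        · exact D.t_mem i hi
        · exact (hRmem i hi x hx).1
    · have cA : (S A).card = V.card + 1 := by rw [SA, hZ A hAU]
      have cB : (S B).card = 0 := by rw [SB]; rfl
      intro i hi j hj hij
      simp only at hij
      rcases Finset.mem_insert.1 hi with rfl | hi
      · rcases Finset.mem_insert.1 hj with rfl | hj
        · rfl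
        rcases Finset.mem_insert.1 hj with rfl | hj
        · omega
        · have := SVc j hj; have := hRc j hj; omega
      rcases Finset.mem_insert.1 hi with rfl | hi
      · rcases Finset.mem_insert.1 hj with rfl | hj
        · omega
        rcases Finset.mem_insert.1 hj with rfl | hj
        · rfl
        · have := SVc j hj; have := hRc j hj; omega
      · have a := SVc i hi
        have b := hRc i hi
        rcases Finset.mem_insert.1 hj with rfl | hj
        · omega
        rcases Finset.mem_insert.1 hj with rfl | hj
        · omega
        · have c := SVc j hj
          exact hR.1.2 hi hj (by simp only; omega)
  refine ⟨S, ⟨Scho, ?_⟩, SA, SB⟩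
  intro S' hS' he
  have hzero : ∀ x, (∀ j ∈ U, x ∉ S j) → ∀ j ∈ U, x ∉ S' j := by
    intro x hx j hj hxj
    have : ∀ i ∈ U, x ∈ S i → x ∈ S' i := fun i hi h => absurd h (hx i hi)
    exact hx j hj (mem_of_val_eq he.symm this j hj hxj)
  have hd : ∀ i ∈ V, d i ∉ S' i := by
    intro i hi
    refine hzero _ ?_ i (hVU i hi)
    intro j hj
    rcases Finset.mem_insert.1 hj with rfl | hj
    · rw [SA]; exact D.d_notMem i hi
    rcases Finset.mem_insert.1 hj with rfl | hj
    · rw [SB]; simp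
    · rw [SV j hj]
      intro h
      have hz : d i ∈ Z j := Scho.1 j (hVU j hj) (by rw [SV j hj]; exact h)
      have e := D.d_eq i hi j hj hz
      rcases Finset.mem_insert.1 h with h | h
      · exact D.ne j hj (by rw [← h, e])
      · exact (hRmem j hj _ h).2.2 e.symm
  have hSB : S' B ⊆ Z A ∩ Z B := by
    intro x hx
    have hxB := hS'.1 B hBU hx
    by_contra hn
    have hxA : x ∉ Z A := fun h => hn (Finset.mem_inter.2 ⟨h, hxB⟩)
    refine hzero x ?_ B hBU hx
    intro j hj
    rcases Finset.mem_insert.1 hj with rfl | hj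
    · rw [SA]; exact hxA
    rcases Finset.mem_insert.1 hj with rfl | hj
    · rw [SB]; simp
    · rw [SV j hj]
      intro h
      rcases Finset.mem_insert.1 h with rfl | h
      · exact hxA (D.t_both j hj hxB)
      · obtain ⟨a, b, c⟩ := hRmem j hj x h
        rcases D.right j hj x a hxB with e | e
        exacts [b e, c e]
  have hc' : ∀ i ∈ U, (S' i).card < U.card := fun i hi => by
    have := Finset.card_le_card (hS'.1 i hi); have := hZ i hi; omega
  -- `S' B` is too small and every other `S' i` misses `d i`, so only `A` can have all of its set.
  have hSA : S' A = Z A := by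
    obtain ⟨i, hi, hic⟩ := exists_card_eq hS'.2 hc' (v := V.card + 1) (by omega)
    have hfull : S' i = Z i := Finset.eq_of_subset_of_card_le (hS'.1 i hi) (by rw [hZ i hi, hic])
    rcases Finset.mem_insert.1 hi with rfl | hi
    · exact hfull
    rcases Finset.mem_insert.1 hi with rfl | hi
    · have := Finset.card_le_card hSB; omega
    · exact absurd (hfull ▸ D.d_mem i hi) (hd i hi)
  have hforce : ∀ i ∈ V, t i ∉ S' B → t i ∈ S' i := by
    intro i hi hB'
    refine mem_of_val_eq he ?_ i (hVU i hi) (by rw [SV i hi]; simp)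
    intro j hj hxj
    have hz := hS'.1 j hj hxj
    rcases Finset.mem_insert.1 hj with rfl | hj
    · rw [SA]; exact hz
    rcases Finset.mem_insert.1 hj with rfl | hj
    · exact absurd hxj hB'
    · rw [SV j hj, D.t_eq i hi j hj hz]; simp
  let R' : ι → Finset α := fun i => (S' i).erase (t i)
  have hR'sub : ∀ i ∈ V, R' i ⊆ residual Z t d i := by
    intro i hi x hx
    rw [hRes i hi]
    obtain ⟨a, b⟩ := Finset.mem_erase.1 hx
    exact ⟨hS'.1 i (hVU i hi) b, a, fun e => hd i hi (e ▸ b)⟩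
  have hvS : val U S = (Z A).val + (∑ i ∈ V, {t i} + val V R) := by
    rw [hU, val_insert₂ hA hB hAB, SA, SB]
    unfold val
    rw [← Finset.sum_add_distrib, Finset.empty_val, zero_add]
    congr 1
    refine Finset.sum_congr rfl fun i hi => ?_
    rw [SV i hi, Finset.insert_val_of_notMem (htR i hi), Multiset.singleton_add]
  have hvS' : (S' B).val + val V S' = ∑ i ∈ V, {t i} + val V R := by
    have := he
    rw [hvS, hU, val_insert₂ hA hB hAB, hSA] at this
    exact add_left_cancel this
  have herase : ∀ i, t i ∈ S' i → (S' i).val = {t i} + (R' i).val := by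
    intro i hi
    rw [Finset.erase_val, Multiset.singleton_add, Multiset.cons_erase hi]
  have hcard : ∀ i, t i ∈ S' i → (S' i).card = (R' i).card + 1 := by
    intro i hi
    have := Finset.card_pos.2 ⟨_, hi⟩
    simp only [R', Finset.card_erase_of_mem hi]; omega
  by_cases hBe : S' B = ∅
  · -- Here every `t i` is taken, and erasing them leaves a residual choice.
    have ht : ∀ i ∈ V, t i ∈ S' i := fun i hi => hforce i hi (by rw [hBe]; simp)
    have hR'ch : IsCh V (residual Z t d) R' := by
      refine ⟨hR'sub, fun i hi j hj hij => hS'.2 (hVU i hi) (hVU j hj) ?_⟩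
      simp only at hij ⊢
      rw [hcard i (ht i hi), hcard j (ht j hj), hij]
    have hv : val V R' = val V R := by
      have e : val V S' = ∑ i ∈ V, {t i} + val V R' := by
        unfold val
        rw [← Finset.sum_add_distrib]
        exact Finset.sum_congr rfl fun i hi => herase i (ht i hi)
      rw [hBe, Finset.empty_val, zero_add, e] at hvS'
      exact add_left_cancel hvS'
    have hfin := hR.2 R' hR'ch hv
    intro i hi
    rcases Finset.mem_insert.1 hi with rfl | hi
    · rw [SA, hSA]
    rcases Finset.mem_insert.1 hi with rfl | hi
    · rw [SB, hBe]
    · rw [SV i hi, ← hfin i hi, Finset.insert_erase (ht i hi)]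
  · -- Here `S' B = {z}` with `z` the common element of `Z A` and `Z B`, so the empty set sits at some
    -- `c ∈ V` with `t c = z`. Erasing the `t i` still gives a residual choice of the same value as `R`,
    -- whence `R c = ∅`.
    exfalso
    obtain ⟨z, hz⟩ := Finset.nonempty_iff_ne_empty.2 hBe
    have hBz : S' B = {z} := by
      apply (Finset.eq_of_subset_of_card_le (Finset.singleton_subset_iff.2 hz) _).symm
      have := Finset.card_le_card hSB
      simp; omega
    obtain ⟨c, hc, hcc⟩ := exists_card_eq hS'.2 hc' (v := 0) (by omega)
    have hce : S' c = ∅ := Finset.card_eq_zero.1 hcc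
    have hcV : c ∈ V := by
      rcases Finset.mem_insert.1 hc with rfl | hc
      · have := hZ c hAU; rw [← hSA] at this; omega
      rcases Finset.mem_insert.1 hc with rfl | hc
      · exact absurd hce hBe
      · exact hc
    have htc : t c = z := by
      by_contra hne
      have := hforce c hcV (by rw [hBz]; simpa using hne)
      rw [hce] at this; simp at this
    have hzAB := Finset.mem_inter.1 (hSB hz)
    have ht : ∀ i ∈ V, i ≠ c → t i ∈ S' i := by
      intro i hi hic
      by_cases hiz : t i = z
      · -- Exchanging the sets at `B` and `c` in `S` does not change the value.
        let T : ι → Finset α := fun j => S (Equiv.swap B c j)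
        have hT : val U S' = val U T := by
          rw [he]
          unfold val
          refine (Finset.sum_equiv (Equiv.swap B c) ?_ ?_).symm
          · intro j
            by_cases j1 : j = B
            · subst j1; simp [hBU, hc]
            by_cases j2 : j = c
            · subst j2; simp [hBU, hc]
            rw [Equiv.swap_apply_of_ne_of_ne j1 j2]
          · intro j _; rfl
        have hTj : ∀ j, j ≠ B → j ≠ c → T j = S j := fun j j1 j2 => by
          simp only [T]; rw [Equiv.swap_apply_of_ne_of_ne j1 j2]
        refine mem_of_val_eq hT ?_ i (hVU i hi) ?_
        · intro j hj hxj
          have hzj := hS'.1 j hj hxj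
          by_cases jc : j = c
          · subst jc; rw [hce] at hxj; simp at hxj
          by_cases jB : j = B
          · subst jB
            simp only [T, Equiv.swap_apply_left]
            rw [SV c hcV, hiz, htc]; simp
          rw [hTj j jB jc]
          rcases Finset.mem_insert.1 hj with rfl | hj
          · rw [SA]; exact hzj
          rcases Finset.mem_insert.1 hj with rfl | hj
          · exact absurd rfl jB
          · rw [SV j hj, D.t_eq i hi j hj hzj]; simp
        · rw [hTj i (neB i hi) hic, SV i hi]; simp
      · exact hforce i hi (by rw [hBz]; simpa using hiz)
    have hRc' : R' c = ∅ := by simp [R', hce]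
    have hcB : (S' B).card = 1 := by rw [hBz]; simp
    have hR'ch : IsCh V (residual Z t d) R' := by
      refine ⟨hR'sub, fun i hi j hj hij => ?_⟩
      have aux : ∀ i ∈ V, i ≠ c → (R' i).card ≠ 0 := by
        intro i hi hic h
        have := hcard i (ht i hi hic)
        exact neB i hi (hS'.2 (hVU i hi) hBU (by simp only; omega))
      simp only at hij
      by_cases ic : i = c
      · by_cases jc : j = c
        · rw [ic, jc]
        · exact absurd (by rw [← hij, ic, hRc']; rfl) (aux j hj jc)
      · by_cases jc : j = c
        · exact absurd (by rw [hij, jc, hRc']; rfl) (aux i hi ic)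
        · refine hS'.2 (hVU i hi) (hVU j hj) ?_
          simp only
          rw [hcard i (ht i hi ic), hcard j (ht j hj jc), hij]
    have hv : val V R' = val V R := by
      have e : {z} + val V S' = ∑ i ∈ V, {t i} + val V R' := by
        unfold val
        rw [← Finset.sum_add_distrib, ← Finset.add_sum_erase V _ hcV,
          ← Finset.add_sum_erase V (fun i => {t i} + (R' i).val) hcV, hce, hRc', htc]
        simp only [Finset.empty_val, zero_add, add_zero]
        congr 1
        refine Finset.sum_congr rfl fun i hi => ?_
        obtain ⟨a, b⟩ := Finset.mem_erase.1 hi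
        exact herase i (ht i b a)
      rw [hBz, Finset.singleton_val, e] at hvS'
      exact add_left_cancel hvS'
    have := hR.2 R' hR'ch hv c hcV
    exact h0 c hcV (htc ▸ hzAB.2) (by rw [hRc'] at this; exact this.symm)

/-! ### Existence and symmetry of the removal data -/

lemma inter_unique {Z : ι → Finset α} {i j : ι} (h : (Z i ∩ Z j).card ≤ 1) {x y : α}
    (hxi : x ∈ Z i) (hxj : x ∈ Z j) (hyi : y ∈ Z i) (hyj : y ∈ Z j) : x = y :=
  Finset.card_le_one.1 h x (Finset.mem_inter.2 ⟨hxi, hxj⟩) y (Finset.mem_inter.2 ⟨hyi, hyj⟩)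

/-- Outside `Z A ∪ Z B`, every element of `Z i` lying in another set can be charged to an index of
`V \ {i}`, injectively since intersections have at most one element. As `Z i` has `V.card + 1`
elements, the elements of `Z i` which lie in no other set, together with those shared with `Z A` or
`Z B`, number at least two. -/
lemma two_le_private {V : Finset ι} {Z : ι → Finset α} {A B : ι}
    (hZ : ∀ i ∈ V, (Z i).card = V.card + 1)
    (hpair : ∀ i ∈ V, ∀ j ∈ V, i ≠ j → (Z i ∩ Z j).card ≤ 1) {i : ι} (hi : i ∈ V) :
    2 ≤ ((Z i).filter (fun x => ∀ j ∈ insert A (insert B V), x ∈ Z j → j = i)).card +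
      (Z i ∩ (Z A ∪ Z B)).card := by
  classical
  set P := (Z i).filter (fun x => ∀ j ∈ insert A (insert B V), x ∈ Z j → j = i) with hP
  set N := Z i ∩ (Z A ∪ Z B) with hN
  set Q := (Z i \ P) \ N with hQ
  have hf : ∀ x ∈ Q, ∃ j ∈ V.erase i, x ∈ Z j := by
    intro x hx
    simp only [hQ, hP, hN, Finset.mem_sdiff, Finset.mem_filter, Finset.mem_inter,
      Finset.mem_union, Finset.mem_insert] at hx
    push Not at hx
    obtain ⟨⟨h1, h2⟩, h3⟩ := hx
    obtain ⟨j, hj, hxj, hne⟩ := h2 h1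
    obtain ⟨hxA, hxB⟩ := h3 h1
    refine ⟨j, Finset.mem_erase.2 ⟨hne, ?_⟩, hxj⟩
    rcases hj with rfl | rfl | hj
    exacts [absurd hxj hxA, absurd hxj hxB, hj]
  have : Nonempty ι := ⟨i⟩
  choose! f hf1 hf2 using hf
  have hQc : Q.card ≤ (V.erase i).card := by
    refine Finset.card_le_card_of_injOn f hf1 ?_
    intro x hx y hy hxy
    have hx' : x ∈ Z i := (Finset.mem_sdiff.1 (Finset.mem_sdiff.1 hx).1).1
    have hy' : y ∈ Z i := (Finset.mem_sdiff.1 (Finset.mem_sdiff.1 hy).1).1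
    obtain ⟨a, b⟩ := Finset.mem_erase.1 (hf1 x hx)
    exact inter_unique (hpair i hi _ b a.symm) hx' (hf2 x hx) hy' (by rw [hxy]; exact hf2 y hy)
  have hZc : (Z i).card ≤ P.card + N.card + Q.card := by
    have : Z i ⊆ P ∪ N ∪ Q := by
      intro x hx
      by_cases h1 : x ∈ P
      · simp [h1]
      by_cases h2 : x ∈ N
      · simp [h2]
      · simp [hQ, hx, h1, h2]
    exact (Finset.card_le_card this).trans ((Finset.card_union_le _ _).trans
      (Nat.add_le_add_right (Finset.card_union_le _ _) _))
  have := Finset.card_erase_of_mem hi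
  have := Finset.card_pos.2 ⟨i, hi⟩
  have := hZ i hi
  omega

lemma exists_stepData [Nonempty α] {V : Finset ι} {Z : ι → Finset α} {A B : ι}
    (hA : A ∉ V) (hB : B ∉ V)
    (hZ : ∀ i ∈ V, (Z i).card = V.card + 1)
    (hpair : ∀ i ∈ insert A (insert B V), ∀ j ∈ insert A (insert B V), i ≠ j →
      (Z i ∩ Z j).card ≤ 1) :
    ∃ t d, StepData V Z A B t d := by
  classical
  have key : ∀ i ∈ V, ∃ t d, t ∈ Z i ∧ d ∈ Z i ∧ t ≠ d ∧
      (∀ x ∈ Z i, x ∈ Z A → x = t ∨ x = d) ∧ (∀ x ∈ Z i, x ∈ Z B → x = t ∨ x = d) ∧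
      d ∉ Z A ∧ (d ∈ Z B ∨ ∀ j ∈ V, d ∈ Z j → j = i) ∧
      (t ∈ Z A ∨ ∀ j ∈ V, t ∈ Z j → j = i) ∧ (t ∈ Z B → t ∈ Z A) ∧
      (t ∈ Z B → ∀ j ∈ V, d ∈ Z j → j = i) := by
    intro i hi
    have hVU : ∀ j ∈ V, j ∈ insert A (insert B V) := fun j hj => by simp [hj]
    have h2 := two_le_private (A := A) (B := B) hZ
      (fun i hi j hj => hpair i (hVU i hi) j (hVU j hj)) hi
    set P := (Z i).filter (fun x => ∀ j ∈ insert A (insert B V), x ∈ Z j → j = i) with hP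
    have hiA : i ≠ A := fun e => hA (e ▸ hi)
    have hiB : i ≠ B := fun e => hB (e ▸ hi)
    have uA : ∀ x ∈ Z i, x ∈ Z A → ∀ y ∈ Z i, y ∈ Z A → x = y := fun x hx hx' y hy hy' =>
      inter_unique (hpair i (hVU i hi) A (by simp) hiA) hx hx' hy hy'
    have uB : ∀ x ∈ Z i, x ∈ Z B → ∀ y ∈ Z i, y ∈ Z B → x = y := fun x hx hx' y hy hy' =>
      inter_unique (hpair i (hVU i hi) B (by simp) hiB) hx hx' hy hy'
    have hPr : ∀ x ∈ P, x ∈ Z i ∧ x ∉ Z A ∧ x ∉ Z B ∧ ∀ j ∈ V, x ∈ Z j → j = i := by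
      intro x hx
      obtain ⟨a, b⟩ := Finset.mem_filter.1 hx
      exact ⟨a, fun h => hiA (b A (by simp) h).symm, fun h => hiB (b B (by simp) h).symm,
        fun j hj => b j (hVU j hj)⟩
    have hpos : (∃ a, Z i ∩ (Z A ∪ Z B) ⊆ {a}) → ∃ p, p ∈ P := by
      rintro ⟨a, ha⟩
      have := Finset.card_le_card ha
      rw [Finset.card_singleton] at this
      exact Finset.card_pos.1 (by omega)
    by_cases ha : ∃ a ∈ Z i, a ∈ Z A
    · obtain ⟨a, ha, haA⟩ := ha
      by_cases hb : ∃ b ∈ Z i, b ∈ Z B ∧ b ≠ a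
      · obtain ⟨b, hb, hbB, hba⟩ := hb
        have hbA : b ∉ Z A := fun h => hba (uA _ hb h _ ha haA)
        have haB : a ∉ Z B := fun h => hba (uB _ hb hbB _ ha h)
        exact ⟨a, b, ha, hb, hba.symm, fun x hx h => .inl (uA _ hx h _ ha haA),
          fun x hx h => .inr (uB _ hx h _ hb hbB), hbA, .inl hbB, .inl haA,
          fun _ => haA, fun h => absurd h haB⟩
      · push Not at hb
        obtain ⟨p, hp⟩ := hpos ⟨a, fun x hx => by
          simp only [Finset.mem_inter, Finset.mem_union] at hx
          rw [Finset.mem_singleton]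
          rcases hx.2 with h | h
          exacts [uA _ hx.1 h _ ha haA, hb x hx.1 h]⟩
        obtain ⟨p1, p2, p3, p4⟩ := hPr p hp
        exact ⟨a, p, ha, p1, fun e => p2 (e ▸ haA), fun x hx h => .inl (uA _ hx h _ ha haA),
          fun x hx h => .inl (hb x hx h), p2, .inr p4, .inl haA, fun _ => haA, fun _ => p4⟩
    · push Not at ha
      by_cases hb : ∃ b ∈ Z i, b ∈ Z B
      · obtain ⟨b, hb, hbB⟩ := hb
        obtain ⟨p, hp⟩ := hpos ⟨b, fun x hx => by
          simp only [Finset.mem_inter, Finset.mem_union] at hx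
          rw [Finset.mem_singleton]
          rcases hx.2 with h | h
          exacts [absurd h (ha x hx.1), uB _ hx.1 h _ hb hbB]⟩
        obtain ⟨p1, p2, p3, p4⟩ := hPr p hp
        exact ⟨p, b, p1, hb, fun e => p3 (e ▸ hbB), fun x hx h => absurd h (ha x hx),
          fun x hx h => .inr (uB _ hx h _ hb hbB), ha b hb, .inl hbB, .inr p4,
          fun h => absurd h p3, fun h => absurd h p3⟩
      · push Not at hb
        have h0 : (Z i ∩ (Z A ∪ Z B)).card = 0 := by
          rw [Finset.card_eq_zero, Finset.eq_empty_iff_forall_notMem]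
          intro x hx
          simp only [Finset.mem_inter, Finset.mem_union] at hx
          rcases hx.2 with h | h
          exacts [ha x hx.1 h, hb x hx.1 h]
        obtain ⟨p, hp, q, hq, hpq⟩ := Finset.one_lt_card.1 (show 1 < P.card by omega)
        obtain ⟨p1, p2, p3, p4⟩ := hPr p hp
        obtain ⟨q1, q2, q3, q4⟩ := hPr q hq
        exact ⟨p, q, p1, q1, hpq, fun x hx h => absurd h (ha x hx),
          fun x hx h => absurd h (hb x hx), q2, .inr q4, .inr p4, fun h => absurd h p3,
          fun h => absurd h p3⟩
  choose! t d k1 k2 k3 k4 k5 k6 k7 k8 k9 k10 using key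
  refine ⟨t, d, k1, k2, k3, k4, k5, k6, ?_, k9, ?_, k10⟩
  · intro i hi j hj hd
    rcases k7 i hi with h | h
    · rcases k5 j hj _ hd h with e | e
      · exact absurd (e ▸ k9 j hj (e ▸ h)) (k6 i hi)
      · exact e.symm
    · rw [h j hj hd]
  · intro i hi j hj ht
    rcases k8 i hi with h | h
    · rcases k4 j hj _ ht h with e | e
      · exact e.symm
      · exact absurd (e ▸ h) (k6 j hj)
    · rw [h j hj ht]

/-- The data for `A, B` give data for `B, A` by exchanging `t i` and `d i`, except at the exceptional
indices, where the common element of `Z A` and `Z B` is taken in either case. -/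
lemma StepData.symm {V : Finset ι} {Z : ι → Finset α} {A B : ι} {t d : ι → α}
    (hB : ∀ i ∈ V, (Z i ∩ Z B).card ≤ 1) (D : StepData V Z A B t d) :
    StepData V Z B A (fun i => if t i ∈ Z B then t i else d i)
      (fun i => if t i ∈ Z B then d i else t i) where
  t_mem i hi := by split_ifs; exacts [D.t_mem i hi, D.d_mem i hi]
  d_mem i hi := by split_ifs; exacts [D.d_mem i hi, D.t_mem i hi]
  ne i hi := by split_ifs; exacts [D.ne i hi, (D.ne i hi).symm]
  left i hi x hx hxB := by
    split_ifs
    exacts [D.right i hi x hx hxB, (D.right i hi x hx hxB).symm]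
  right i hi x hx hxA := by
    split_ifs
    exacts [D.left i hi x hx hxA, (D.left i hi x hx hxA).symm]
  d_notMem i hi := by
    split_ifs with h
    · exact fun h' => D.ne i hi
        (inter_unique (hB i hi) (D.t_mem i hi) h (D.d_mem i hi) h')
    · exact h
  d_eq i hi j hj := by
    by_cases h : t i ∈ Z B
    · simp only [h, if_true]
      intro h'
      have := D.d_private i hi h j hj h'
      subst this
      simp [h]
    · simp only [h, if_false]
      intro h'
      have := D.t_eq i hi j hj h'
      simp [this, h]
  t_both i hi := by
    split_ifs with h
    · exact fun _ => h
    · exact fun h' => absurd h' (D.d_notMem i hi)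
  t_eq i hi j hj := by
    by_cases h : t i ∈ Z B
    · simp only [h, if_true]
      intro h'
      have := D.t_eq i hi j hj h'
      simp [this, h]
    · simp only [h, if_false]
      intro h'
      have e := D.d_eq i hi j hj h'
      split_ifs with hj'
      · have := D.d_private j hj hj' i hi (e ▸ D.d_mem i hi)
        subst this
        exact absurd hj' h
      · exact e
  d_private i hi := by
    by_cases h : t i ∈ Z B
    · simp only [h, if_true]
      exact fun _ => D.d_private i hi h
    · simp only [h, if_false]
      exact fun h' => absurd h' (D.d_notMem i hi)

lemma residual_symm (Z : ι → Finset α) (B : ι) (t d : ι → α) :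
    residual Z (fun i => if t i ∈ Z B then t i else d i)
      (fun i => if t i ∈ Z B then d i else t i) = residual Z t d := by
  funext i
  simp only [residual]
  split_ifs
  · rfl
  · rw [Finset.pair_comm]

/-! ### The complete graph on four indices -/

/-- The sets are the edge stars of the complete graph on `a, b, c, d`. The unique choice is
`{ab, ac, ad}, {ab, bc}, {bc}, ∅`: here `ab` and `bc` are used by both their ends while `bd` and `cd`
are not used, which fixes the set at `b` with two elements, and then the ones at `c`, `d` and `a`. -/
lemma complete_four {Z : ι → Finset α} {a b c d : ι} {ab ac ad bc bd cd : α}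
    (hab : a ≠ b) (hac : a ≠ c) (had : a ≠ d) (hbc : b ≠ c) (hbd : b ≠ d) (hcd : c ≠ d)
    (n1 : ab ≠ ac) (n2 : ab ≠ ad) (n3 : ab ≠ bc) (n4 : ab ≠ bd) (n5 : ab ≠ cd)
    (n6 : ac ≠ ad) (n7 : ac ≠ bc) (n8 : ac ≠ bd) (n9 : ac ≠ cd)
    (n10 : ad ≠ bc) (n11 : ad ≠ bd) (n12 : ad ≠ cd) (n13 : bc ≠ bd) (n14 : bc ≠ cd)
    (Za : Z a = {ab, ac, ad}) (Zb : Z b = {ab, bc, bd}) (Zc : Z c = {ac, bc, cd})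
    (Zd : Z d = {ad, bd, cd}) :
    ∃ S, IsUniq {a, b, c, d} Z S := by
  let S : ι → Finset α := fun i => if i = a then {ab, ac, ad} else if i = b then {ab, bc} else
    if i = c then {bc} else ∅
  have Sa : S a = {ab, ac, ad} := by simp [S]
  have Sb : S b = {ab, bc} := by simp [S, hab.symm]
  have Sc : S c = {bc} := by simp [S, hac.symm, hbc.symm]
  have Sd : S d = ∅ := by simp [S, had.symm, hbd.symm, hcd.symm]
  have Ca : (S a).card = 3 := by rw [Sa]; simp [n1, n2, n6]
  have Cb : (S b).card = 2 := by rw [Sb]; simp [n3]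
  have Cc : (S c).card = 1 := by rw [Sc]; simp
  have Cd : (S d).card = 0 := by rw [Sd]; simp
  refine ⟨S, ⟨?_, ?_⟩, ?_⟩
  · intro i hi
    simp only [Finset.mem_insert, Finset.mem_singleton] at hi
    rcases hi with rfl | rfl | rfl | rfl
    · rw [Sa, Za]
    · rw [Sb, Zb]; grind
    · rw [Sc, Zc]; grind
    · rw [Sd]; simp
  · intro i hi j hj hij
    simp only [Finset.coe_insert, Finset.coe_singleton, Set.mem_insert_iff,
      Set.mem_singleton_iff] at hi hj
    simp only at hij
    rcases hi with rfl | rfl | rfl | rfl <;> rcases hj with rfl | rfl | rfl | rfl <;>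
      first | rfl | omega
  · intro S' hS' he
    have ma : a ∈ ({a, b, c, d} : Finset ι) := by simp
    have mb : b ∈ ({a, b, c, d} : Finset ι) := by simp
    have mc : c ∈ ({a, b, c, d} : Finset ι) := by simp
    have md : d ∈ ({a, b, c, d} : Finset ι) := by simp
    have sa := hS'.1 a ma
    have sb := hS'.1 b mb
    have sc := hS'.1 c mc
    have sd := hS'.1 d md
    rw [Za] at sa
    rw [Zb] at sb
    rw [Zc] at sc
    rw [Zd] at sd
    have hzero : ∀ x, x = bd ∨ x = cd → ∀ i ∈ ({a, b, c, d} : Finset ι), x ∉ S' i := by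
      intro x hx i hi hxi
      have h0 : ∀ j ∈ ({a, b, c, d} : Finset ι), x ∉ S j := by
        intro j hj
        simp only [Finset.mem_insert, Finset.mem_singleton] at hj
        rcases hj with rfl | rfl | rfl | rfl
        · rw [Sa]; grind
        · rw [Sb]; grind
        · rw [Sc]; grind
        · rw [Sd]; simp
      exact h0 i hi (mem_of_val_eq he.symm (fun j hj h => absurd h (h0 j hj)) i hi hxi)
    have hfull : ∀ x, x = ab ∨ x = bc → ∀ i ∈ ({a, b, c, d} : Finset ι), x ∈ Z i → x ∈ S' i := by
      intro x hx
      have h1 : ∀ j ∈ ({a, b, c, d} : Finset ι), x ∈ Z j → x ∈ S j := by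
        intro j hj
        simp only [Finset.mem_insert, Finset.mem_singleton] at hj
        rcases hj with rfl | rfl | rfl | rfl
        · rw [Sa, Za]; exact id
        · rw [Sb, Zb]; grind
        · rw [Sc, Zc]; grind
        · rw [Sd, Zd]; grind
      intro i hi hxi
      exact mem_of_val_eq he (fun j hj h => h1 j hj (hS'.1 j hj h)) i hi (h1 i hi hxi)
    have eb : S' b = {ab, bc} := by
      have f1 := hfull ab (.inl rfl) b mb (by simp [Zb])
      have f2 := hfull bc (.inr rfl) b mb (by simp [Zb])
      have f3 := hzero bd (.inl rfl) b mb
      ext x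
      have := @sb x
      simp only [Finset.mem_insert, Finset.mem_singleton] at this ⊢
      grind
    have ec : S' c = {bc} := by
      have f1 := hfull bc (.inr rfl) c mc (by simp [Zc])
      have f2 := hzero cd (.inr rfl) c mc
      have f3 : ac ∉ S' c := by
        intro h
        have : S' c = {ac, bc} := by
          ext x
          have := @sc x
          simp only [Finset.mem_insert, Finset.mem_singleton] at this ⊢
          grind
        refine hbc (hS'.2 mb mc ?_)
        simp only [this, eb]
        rw [Finset.card_pair n3, Finset.card_pair n7]
      ext x
      have := @sc x
      simp only [Finset.mem_insert, Finset.mem_singleton] at this ⊢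
      grind
    have ed : S' d = ∅ := by
      have f1 := hzero bd (.inl rfl) d md
      have f2 := hzero cd (.inr rfl) d md
      have f3 : ad ∉ S' d := by
        intro h
        have : S' d = {ad} := by
          ext x
          have := @sd x
          simp only [Finset.mem_insert, Finset.mem_singleton] at this ⊢
          grind
        refine hcd (hS'.2 mc md ?_)
        simp only [this, ec, Finset.card_singleton]
      ext x
      have := @sd x
      simp only [Finset.mem_insert, Finset.mem_singleton, Finset.notMem_empty] at this ⊢
      grind
    have ea : S' a = S a := by
      have := he
      unfold val at this
      rw [Finset.sum_insert (by simp [hab, hac, had]), Finset.sum_insert (by simp [hbc, hbd]),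
        Finset.sum_insert (by simp [hcd]), Finset.sum_singleton,
        Finset.sum_insert (by simp [hab, hac, had]), Finset.sum_insert (by simp [hbc, hbd]),
        Finset.sum_insert (by simp [hcd]), Finset.sum_singleton, eb, ec, ed, Sb, Sc, Sd] at this
      exact Finset.val_injective (add_right_cancel this)
    intro i hi
    simp only [Finset.mem_insert, Finset.mem_singleton] at hi
    rcases hi with rfl | rfl | rfl | rfl
    exacts [ea, eb.trans Sb.symm, ec.trans Sc.symm, ed.trans Sd.symm]

/-- Four sets such that every two of them share an element missing from the other two form the
configuration of `complete_four`. -/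
lemma complete_four' {V : Finset ι} (hV : V.card = 4) {Z : ι → Finset α}
    (hZ : ∀ i ∈ V, (Z i).card = 3)
    (hbad : ∀ A ∈ V, ∀ B ∈ V, A ≠ B → ∃ x, x ∉ Z A ∧ x ∉ Z B ∧
      ∀ i ∈ V, i ≠ A → i ≠ B → x ∈ Z i) :
    ∃ S, IsUniq V Z S := by
  obtain ⟨a, b, c, d, hab, hac, had, hbc, hbd, hcd, rfl⟩ := Finset.card_eq_four.1 hV
  obtain ⟨ab, ab1, ab2, ab3⟩ := hbad c (by simp) d (by simp) hcd
  obtain ⟨ac, ac1, ac2, ac3⟩ := hbad b (by simp) d (by simp) hbd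
  obtain ⟨ad, ad1, ad2, ad3⟩ := hbad b (by simp) c (by simp) hbc
  obtain ⟨bc, bc1, bc2, bc3⟩ := hbad a (by simp) d (by simp) had
  obtain ⟨bd, bd1, bd2, bd3⟩ := hbad a (by simp) c (by simp) hac
  obtain ⟨cd, cd1, cd2, cd3⟩ := hbad a (by simp) b (by simp) hab
  have aba := ab3 a (by simp) hac had
  have abb := ab3 b (by simp) hbc hbd
  have aca := ac3 a (by simp) hab had
  have acc := ac3 c (by simp) hbc.symm hcd
  have ada := ad3 a (by simp) hab hac
  have hadd := ad3 d (by simp) hbd.symm hcd.symm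
  have bcb := bc3 b (by simp) hab.symm hbd
  have bcc := bc3 c (by simp) hac.symm hcd
  have bdb := bd3 b (by simp) hab.symm hbc
  have bdd := bd3 d (by simp) had.symm hcd.symm
  have cdc := cd3 c (by simp) hac.symm hbc.symm
  have cdd := cd3 d (by simp) had.symm hbd.symm
  have triple : ∀ i ∈ ({a, b, c, d} : Finset ι), ∀ x ∈ Z i, ∀ y ∈ Z i, ∀ z ∈ Z i,
      x ≠ y → x ≠ z → y ≠ z → Z i = {x, y, z} := by
    intro i hi x hx y hy z hz xy xz yz
    refine (Finset.eq_of_subset_of_card_le ?_ ?_).symm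
    · intro w hw
      simp only [Finset.mem_insert, Finset.mem_singleton] at hw
      rcases hw with rfl | rfl | rfl <;> assumption
    · rw [hZ i hi, Finset.card_eq_three.2 ⟨x, y, z, xy, xz, yz, rfl⟩]
  have n1 : ab ≠ ac := fun e => ac1 (e ▸ abb)
  have n2 : ab ≠ ad := fun e => ad1 (e ▸ abb)
  have n3 : ab ≠ bc := fun e => bc1 (e ▸ aba)
  have n4 : ab ≠ bd := fun e => bd1 (e ▸ aba)
  have n5 : ab ≠ cd := fun e => cd1 (e ▸ aba)
  have n6 : ac ≠ ad := fun e => ad2 (e ▸ acc)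
  have n7 : ac ≠ bc := fun e => bc1 (e ▸ aca)
  have n8 : ac ≠ bd := fun e => bd1 (e ▸ aca)
  have n9 : ac ≠ cd := fun e => cd1 (e ▸ aca)
  have n10 : ad ≠ bc := fun e => bc1 (e ▸ ada)
  have n11 : ad ≠ bd := fun e => bd1 (e ▸ ada)
  have n12 : ad ≠ cd := fun e => cd1 (e ▸ ada)
  have n13 : bc ≠ bd := fun e => bd2 (e ▸ bcc)
  have n14 : bc ≠ cd := fun e => cd2 (e ▸ bcb)
  exact complete_four hab hac had hbc hbd hcd n1 n2 n3 n4 n5 n6 n7 n8 n9 n10 n11 n12 n13 n14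
    (triple a (by simp) _ aba _ aca _ ada n1 n2 n6)
    (triple b (by simp) _ abb _ bcb _ bdb n3 n4 n13)
    (triple c (by simp) _ acc _ bcc _ cdc n7 n9 n14)
    (triple d (by simp) _ hadd _ bdd _ cdd n11 n12 fun e => cd2 (e ▸ bdb))

/-! ### Choosing the pair, and the induction -/

/-- The pair `A, B` may not be removed, since some element outside `Z A ∪ Z B` lies in all the other
sets. For `V.card ≤ 3` the residual family has at most one member, so no pair is bad. -/
def IsBad (V : Finset ι) (Z : ι → Finset α) (A B : ι) : Prop :=
  4 ≤ V.card ∧ ∃ x, x ∉ Z A ∧ x ∉ Z B ∧ ∀ i ∈ V, i ≠ A → i ≠ B → x ∈ Z i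

/-- Either some pair that is not bad is not contained in `W` (by an index outside `W`, or because `W`
has at most one element), or there are four indices and all pairs are bad. Indeed, for `A ∉ W` and
`V.card ≥ 5`, two bad pairs `A, B` and `A, C` would give two sets sharing two elements; and for
`V.card = 4` a bad pair gives an element common to the two complementary sets, so these are not
both in `W`. -/
lemma exists_pair {V W : Finset ι} {Z : ι → Finset α} (hV : 2 ≤ V.card)
    (hpair : ∀ i ∈ V, ∀ j ∈ V, i ≠ j → (Z i ∩ Z j).card ≤ 1)
    (hWV : W ⊆ V) (hW : W ≠ V) (hdisj : ∀ i ∈ W, ∀ j ∈ W, i ≠ j → Disjoint (Z i) (Z j)) :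
    (∃ A ∈ V, ∃ B ∈ V, A ≠ B ∧ A ∉ W ∧ ¬ IsBad V Z A B) ∨
    (∃ A ∈ V, ∃ B ∈ V, A ≠ B ∧ W.card ≤ 1 ∧ ¬ IsBad V Z A B) ∨
    (V.card = 4 ∧ W.card ≤ 1 ∧ ∀ A ∈ V, ∀ B ∈ V, A ≠ B → IsBad V Z A B) := by
  obtain ⟨A, hA, hAW⟩ := Finset.exists_of_ssubset (hWV.ssubset_of_ne hW)
  by_cases hall : ∃ B ∈ V, A ≠ B ∧ ¬ IsBad V Z A B
  · obtain ⟨B, hB, h1, h2⟩ := hall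
    exact .inl ⟨A, hA, B, hB, h1, hAW, h2⟩
  push Not at hall
  right
  have hVA := Finset.card_erase_of_mem hA
  have h4 : V.card = 4 := by
    obtain ⟨B, hB⟩ := Finset.card_pos.1 (show 0 < (V.erase A).card by omega)
    obtain ⟨hBA, hB⟩ := Finset.mem_erase.1 hB
    obtain ⟨hge, x, hxA, hxB, hx⟩ := hall B hB hBA.symm
    by_contra hne
    have hVAB := Finset.card_erase_of_mem (Finset.mem_erase.2 ⟨hBA, hB⟩)
    obtain ⟨C, hC⟩ := Finset.card_pos.1 (show 0 < ((V.erase A).erase B).card by omega)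
    have hVABC := Finset.card_erase_of_mem hC
    obtain ⟨hCB, hC⟩ := Finset.mem_erase.1 hC
    obtain ⟨hCA, hC⟩ := Finset.mem_erase.1 hC
    obtain ⟨-, y, hyA, hyC, hy⟩ := hall C hC hCA.symm
    obtain ⟨i, hi, j, hj, hij⟩ :=
      Finset.one_lt_card.1 (show 1 < (((V.erase A).erase B).erase C).card by omega)
    simp only [Finset.mem_erase] at hi hj
    have hxy : x = y := inter_unique (hpair i hi.2.2.2 j hj.2.2.2 hij)
      (hx i hi.2.2.2 hi.2.2.1 hi.2.1) (hx j hj.2.2.2 hj.2.2.1 hj.2.1)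
      (hy i hi.2.2.2 hi.2.2.1 hi.1) (hy j hj.2.2.2 hj.2.2.1 hj.1)
    exact hyC (hxy ▸ hx C hC hCA hCB)
  have hW1 : W.card ≤ 1 := by
    by_contra hlt
    obtain ⟨c, hc, d, hd, hcd⟩ := Finset.one_lt_card.1 (not_le.1 hlt)
    have hcA : c ≠ A := fun e => hAW (e ▸ hc)
    have hdA : d ≠ A := fun e => hAW (e ▸ hd)
    have e1 := Finset.card_erase_of_mem (Finset.mem_erase.2 ⟨hcA, hWV hc⟩)
    have e2 := Finset.card_erase_of_mem
      (Finset.mem_erase.2 ⟨hcd.symm, Finset.mem_erase.2 ⟨hdA, hWV hd⟩⟩)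
    obtain ⟨B, hB⟩ := Finset.card_pos.1 (show 0 < (((V.erase A).erase c).erase d).card by omega)
    simp only [Finset.mem_erase] at hB
    obtain ⟨-, x, -, -, hx⟩ := hall B hB.2.2.2 hB.2.2.1.symm
    exact Finset.disjoint_left.1 (hdisj c hc d hd hcd)
      (hx c (hWV hc) hcA (Ne.symm hB.2.1)) (hx d (hWV hd) hdA (Ne.symm hB.1))
  by_cases hall' : ∃ A ∈ V, ∃ B ∈ V, A ≠ B ∧ ¬ IsBad V Z A B
  · obtain ⟨A, hA, B, hB, h1, h2⟩ := hall'
    exact .inl ⟨A, hA, B, hB, h1, hW1, h2⟩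
  · push Not at hall'
    exact .inr ⟨h4, hW1, hall'⟩

lemma avoid_of_card_le_one {W : Finset ι} (hW : W.card ≤ 1) {Z S : ι → Finset α}
    (hZ : ∀ i ∈ W, Z i ≠ ∅) : (∀ i ∈ W, S i ≠ Z i) ∨ (∀ i ∈ W, S i ≠ ∅) := by
  by_contra! h
  obtain ⟨⟨i, hi, h1⟩, ⟨j, hj, h2⟩⟩ := h
  have := Finset.card_le_one.1 hW i hi j hj
  subst this
  exact hZ i hi (h1 ▸ h2)

/-- The induction statement. The set `W` strengthens the conclusion: the largest and the smallest
set of the unique choice do not both sit at indices of `W`. -/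
theorem exists_isUniq [Nonempty α] (k : ℕ) : ∀ (V W : Finset ι) (Z : ι → Finset α), V.card = k →
    (∀ i ∈ V, (Z i).card + 1 = k) →
    (∀ i ∈ V, ∀ j ∈ V, i ≠ j → (Z i ∩ Z j).card ≤ 1) →
    (2 ≤ k → ∀ x, ∃ i ∈ V, x ∉ Z i) →
    W ⊆ V → (V.Nonempty → W ≠ V) →
    (∀ i ∈ W, ∀ j ∈ W, i ≠ j → Disjoint (Z i) (Z j)) →
    ∃ S, IsUniq V Z S ∧ ((∀ i ∈ W, S i ≠ Z i) ∨ (∀ i ∈ W, S i ≠ ∅)) := by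
  classical
  induction k using Nat.strong_induction_on with
  | _ k ih =>
  intro U W Z hUk hZ hpair hcom hWU hW hdisj
  by_cases hk : k < 2
  · -- There is at most one index, its set is empty, and `W = ∅`.
    have hZe : ∀ i ∈ U, Z i = ∅ := fun i hi => Finset.card_eq_zero.1 (by have := hZ i hi; omega)
    have hWe : W = ∅ := by
      rcases U.eq_empty_or_nonempty with rfl | hne
      · exact Finset.subset_empty.1 hWU
      · have := Finset.card_lt_card (hWU.ssubset_of_ne (hW hne))
        exact Finset.card_eq_zero.1 (by omega)
    refine ⟨fun _ => ∅, ⟨⟨fun i _ => by simp, ?_⟩, ?_⟩, .inl (by simp [hWe])⟩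
    · intro i hi j hj _
      exact Finset.card_le_one.1 (show U.card ≤ 1 by omega) i hi j hj
    · intro S' hS' _ i hi
      exact Finset.subset_empty.1 (hZe i hi ▸ hS'.1 i hi)
  have hk2 : 2 ≤ k := not_lt.1 hk
  have hUne : U.Nonempty := Finset.card_pos.1 (by omega)
  have hZne : ∀ i ∈ U, Z i ≠ ∅ := fun i hi e => by
    have := hZ i hi; rw [e, Finset.card_empty] at this; omega
  -- A pair that is not bad can be removed, in one of its two orders.
  have main : ∀ A ∈ U, ∀ B ∈ U, A ≠ B → ¬ IsBad U Z A B → ∃ S, IsUniq U Z S ∧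
      ((S A = Z A ∧ S B = ∅) ∨ (S B = Z B ∧ S A = ∅)) := by
    intro A hA B hB hAB hgood
    obtain ⟨V, hVA, hVB, hV⟩ : ∃ V : Finset ι, A ∉ V ∧ B ∉ V ∧ U = insert A (insert B V) := by
      refine ⟨(U.erase A).erase B, by simp, by simp, ?_⟩
      rw [Finset.insert_erase (Finset.mem_erase.2 ⟨hAB.symm, hB⟩), Finset.insert_erase hA]
    have hVU : ∀ i ∈ V, i ∈ U := fun i hi => by simp [hV, hi]
    have hVc : V.card + 2 = k := by
      rw [← hUk, hV, Finset.card_insert_of_notMem (by simp [hVA, hAB]),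
        Finset.card_insert_of_notMem hVB]
    have neA : ∀ i ∈ V, i ≠ A := fun i hi e => hVA (e ▸ hi)
    have neB : ∀ i ∈ V, i ≠ B := fun i hi e => hVB (e ▸ hi)
    have hZ' : ∀ i ∈ U, (Z i).card = V.card + 1 := fun i hi => by have := hZ i hi; omega
    have hABc : (Z A ∩ Z B).card ≤ 1 := hpair A hA B hB hAB
    have hABlt : (Z A ∩ Z B).card < V.card + 1 := by
      rcases V.eq_empty_or_nonempty with rfl | hne
      · have : Z A ∩ Z B = ∅ := by
          rw [Finset.eq_empty_iff_forall_notMem]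
          intro x hx
          obtain ⟨i, hi, hxi⟩ := hcom hk2 x
          rw [Finset.mem_inter] at hx
          rw [hV] at hi
          simp only [Finset.mem_insert, Finset.notMem_empty, or_false] at hi
          rcases hi with rfl | rfl
          exacts [hxi hx.1, hxi hx.2]
        simp [this]
      · have := Finset.card_pos.2 hne
        omega
    obtain ⟨t, d, D⟩ := exists_stepData hVA hVB (fun i hi => hZ' i (hVU i hi))
      (fun i hi j hj => hpair i (hV ▸ hi) j (hV ▸ hj))
    have D' := D.symm (fun i hi => hpair i (hVU i hi) B hB (neB i hi))
    have hRsub : ∀ i, residual Z t d i ⊆ Z i := fun i => Finset.sdiff_subset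
    have hResc : ∀ i ∈ V, (residual Z t d i).card + 1 = V.card := by
      intro i hi
      have := Finset.card_sdiff_add_card_eq_card (s := {t i, d i}) (t := Z i)
        (by intro x; simp; rintro (rfl | rfl); exacts [D.t_mem i hi, D.d_mem i hi])
      rw [Finset.card_pair (D.ne i hi), hZ' i (hVU i hi)] at this
      unfold residual; omega
    have hRmem : ∀ i, ∀ x, x ∈ residual Z t d i ↔ x ∈ Z i ∧ x ≠ t i ∧ x ≠ d i := by
      intro i x; simp [residual]
    have htt : ∀ i ∈ V, ∀ j ∈ V, t i ∈ Z B → t j ∈ Z B → t i = t j := fun i hi j hj h1 h2 =>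
      inter_unique hABc (D.t_both i hi h1) h1 (D.t_both j hj h2) h2
    obtain ⟨R, hR, hRW⟩ := ih V.card (by omega) V (V.filter (fun i => t i ∈ Z B))
      (residual Z t d) rfl hResc
      (fun i hi j hj hij => (Finset.card_le_card (Finset.inter_subset_inter (hRsub i)
        (hRsub j))).trans (hpair i (hVU i hi) j (hVU j hj) hij))
      (by
        intro hV2 x
        by_contra! hx
        refine hgood ⟨by omega, x, ?_, ?_, ?_⟩
        · intro hxA
          obtain ⟨i, hi⟩ := Finset.card_pos.1 (show 0 < V.card by omega)
          obtain ⟨h1, h2, h3⟩ := (hRmem i x).1 (hx i hi)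
          rcases D.left i hi x h1 hxA with e | e
          exacts [h2 e, h3 e]
        · intro hxB
          obtain ⟨i, hi⟩ := Finset.card_pos.1 (show 0 < V.card by omega)
          obtain ⟨h1, h2, h3⟩ := (hRmem i x).1 (hx i hi)
          rcases D.right i hi x h1 hxB with e | e
          exacts [h2 e, h3 e]
        · intro i hi h1 h2
          refine hRsub i (hx i ?_)
          rw [hV] at hi
          simpa [h1, h2] using hi)
      (Finset.filter_subset _ _)
      (by
        rintro ⟨i, hi⟩ he
        have hall : ∀ j ∈ V, t j ∈ Z B := fun j hj =>
          (Finset.mem_filter.1 (he.symm ▸ hj : j ∈ V.filter (fun i => t i ∈ Z B))).2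
        obtain ⟨j, hj, hxj⟩ := hcom hk2 (t i)
        rw [hV] at hj
        rcases Finset.mem_insert.1 hj with rfl | hj
        · exact hxj (D.t_both i hi (hall i hi))
        rcases Finset.mem_insert.1 hj with rfl | hj
        · exact hxj (hall i hi)
        · exact hxj (htt i hi j hj (hall i hi) (hall j hj) ▸ D.t_mem j hj))
      (by
        intro i hi j hj hij
        obtain ⟨hi, hiB⟩ := Finset.mem_filter.1 hi
        obtain ⟨hj, hjB⟩ := Finset.mem_filter.1 hj
        rw [Finset.disjoint_left]
        intro x hxi hxj
        refine ((hRmem i x).1 hxi).2.1 (inter_unique (hpair i (hVU i hi) j (hVU j hj) hij)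
          (hRsub i hxi) (hRsub j hxj) (D.t_mem i hi) ?_)
        rw [htt i hi j hj hiB hjB]
        exact D.t_mem j hj)
    -- If no exceptional index has the smallest set in `R`, then `step` applies directly; if none has
    -- the largest, it applies to the complement of `R` with `A` and `B` exchanged.
    rcases hRW with hRW | hRW
    · have hR' := hR.compl (c := V.card - 1) (fun i hi => by have := hResc i hi; omega)
      rw [← residual_symm Z B t d] at hR'
      have hU' : U = insert B (insert A V) := by rw [hV, Finset.insert_comm]
      obtain ⟨S, hS, h1, h2⟩ := step hVB hVA hAB.symm (hU' ▸ hZ') (by rwa [Finset.inter_comm])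
        (by rwa [Finset.inter_comm]) D' hR' (by
          intro i hi hiA
          have htB : t i ∈ Z B := by
            by_contra hn
            rw [if_neg hn] at hiA
            exact D.d_notMem i hi hiA
          intro he
          rw [residual_symm Z B t d] at he
          exact hRW i (Finset.mem_filter.2 ⟨hi, htB⟩)
            (Finset.Subset.antisymm (hR.1.1 i hi) (Finset.sdiff_eq_empty_iff_subset.1 he)))
      exact ⟨S, hU' ▸ hS, .inr ⟨h1, h2⟩⟩
    · obtain ⟨S, hS, h1, h2⟩ := step hVA hVB hAB (hV ▸ hZ') hABc hABlt D hR
        (fun i hi hiB => hRW i (Finset.mem_filter.2 ⟨hi, hiB⟩))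
      exact ⟨S, hV ▸ hS, .inl ⟨h1, h2⟩⟩
  rcases exists_pair (by omega) hpair hWU (hW hUne) hdisj with
    ⟨A, hA, B, hB, hAB, hAW, hg⟩ | ⟨A, hA, B, hB, hAB, hW1, hg⟩ | ⟨h4, hW1, hbad⟩
  · obtain ⟨S, hS, hSAB⟩ := main A hA B hB hAB hg
    refine ⟨S, hS, ?_⟩
    rcases hSAB with ⟨h1, -⟩ | ⟨-, h1⟩
    · refine .inl fun i hi h => hAW ?_
      have := hS.1.2 (hWU hi) hA (by
        simp only [h, h1]; have := hZ i (hWU hi); have := hZ A hA; omega)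
      exact this ▸ hi
    · refine .inr fun i hi h => hAW ?_
      have := hS.1.2 (hWU hi) hA (by simp only [h, h1])
      exact this ▸ hi
  · obtain ⟨S, hS, -⟩ := main A hA B hB hAB hg
    exact ⟨S, hS, avoid_of_card_le_one hW1 fun i hi => hZne i (hWU hi)⟩
  · obtain ⟨S, hS⟩ := complete_four' h4 (fun i hi => by have := hZ i hi; omega)
      (fun A hA B hB hAB => (hbad A hA B hB hAB).2)
    exact ⟨S, hS, avoid_of_card_le_one hW1 fun i hi => hZne i (hWU hi)⟩

end UniqueMultiset

/-- The Unique-Multiset Conjecture holds when the sets `Z i` pairwise intersect in at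
most one element. -/
theorem unique_multiset_of_pairwise_inter (n k : ℕ) (hk : 1 ≤ k) (hkn : k ≤ n)
    (Z : Fin k → Finset (Fin n)) (hZ : ∀ i, (Z i).card = k - 1)
    (hint : ∀ I : Finset (Fin k), I.Nonempty → (I.inf Z).card ≤ k - I.card)
    (hpair : ∀ i i' : Fin k, i ≠ i' → (Z i ∩ Z i').card ≤ 1) :
    ∃ (σ : Equiv.Perm (Fin k)) (S : Fin k → Finset (Fin n)),
      IsChoice n k Z σ S ∧
      ∀ (σ' : Equiv.Perm (Fin k)) (S' : Fin k → Finset (Fin n)),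
        IsChoice n k Z σ' S' → choiceValue n k S' = choiceValue n k S →
          σ' = σ ∧ S' = S := by
  classical
  have : Nonempty (Fin n) := ⟨⟨0, by omega⟩⟩
  have hne : (Finset.univ : Finset (Fin k)).Nonempty := ⟨⟨0, hk⟩, by simp⟩
  obtain ⟨S, hS, -⟩ := UniqueMultiset.exists_isUniq k Finset.univ ∅ Z (by simp)
    (fun i _ => by rw [hZ i]; omega) (fun i _ j _ h => hpair i j h)
    (by
      intro _ x
      by_contra! hx
      have h := hint Finset.univ hne
      rw [Finset.card_univ, Fintype.card_fin, Nat.sub_self, Nat.le_zero,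
        Finset.card_eq_zero] at h
      have hmem : x ∈ Finset.univ.inf Z := Finset.mem_inf.2 hx
      rw [h] at hmem
      simp at hmem)
    (by simp) (fun h => h.ne_empty.symm) (by simp)
  have hlt : ∀ i, (S i).card < k := fun i => by
    have := Finset.card_le_card (hS.1.1 i (Finset.mem_univ i))
    rw [hZ i] at this; omega
  have hinj : Function.Injective (fun i : Fin k => (⟨(S i).card, hlt i⟩ : Fin k)) := by
    intro i j hij
    exact hS.1.2 (by simp) (by simp) (Fin.ext_iff.1 hij)
  refine ⟨Equiv.ofBijective _ (Finite.injective_iff_bijective.1 hinj), S,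
    fun i => ⟨hS.1.1 i (Finset.mem_univ i), rfl⟩, ?_⟩
  intro σ' S' hS' hv
  have hSS : S' = S := by
    funext i
    refine hS.2 S' ⟨fun i _ => (hS' i).1, ?_⟩ hv i (Finset.mem_univ i)
    intro i _ j _ hij
    simp only [(hS' _).2] at hij
    exact σ'.injective (Fin.ext hij)
  refine ⟨?_, hSS⟩
  ext i
  rw [← (hS' i).2, hSS]
  rfl
end

section
/- Let 1 ≤ k ≤ n and let Z_1,…,Z_k be (k−1)-element subsets of {1,…,n} satisfying |⋂_{i∈I} Z_i| ≤ k − |I| for every nonempty subset I ⊆ {1,…,k}, and additionally satisfying |Z_i ∩ Z_{i′}| ≤ 1 for all i ≠ i′. Then for every finite field F_q with q ≥ n + k − 1 elements there exists a k×n matrix G over F_q such that G_{i,j} = 0 whenever j ∈ Z_i, and every set of k columns of G is linearly independent; that is, G generates an [n,k] MDS code whose generator matrix has zero entries at all the prescribed positions. (This settles the Simplified GM-MDS Conjecture in the case where the sets of zero coordinates of the rows pairwise share at most one element.) -/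
/-!
The matrix is `G i j = p_i(α_j)`, where `p_i = ∏_{j ∈ Z i} (x - α_j)` has degree `k - 1`. It
factors as (coefficient matrix of the `p_i`) times (Vandermonde matrix of the `α_j`), so it is MDS
as soon as the `α_j` are distinct and the coefficient matrix is invertible. Both conditions are
the nonvanishing of a polynomial in the `α_j`. The determinant of the coefficient matrix has degree
at most `k - 1` in each variable, since each `j` lies in at most `k - 1` of the `Z i`, and the
Vandermonde determinant has degree at most `n - 1`. A nonzero product of the two therefore has a
nonvanishing point over a field with at least `n + k - 1` elements.

It remains to see that the `p_i`, with indeterminates `X_j` in place of the `α_j`, are linearly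
independent. This is `GMAdmissible.indep`, which follows Lovett's argument for the general GM-MDS
conjecture: one proves more generally that for the products `x ^ e_i * ∏_{j ∈ S_i} (x - X_j)` the
only relation `∑ q_i * x ^ e_i * ∏_{j ∈ S_i} (x - X_j) = 0` with `deg q_i < d_i`, where
`d_i = k - |S_i| - e_i`, is the trivial one, provided that for each nonempty set `I` of indices
`∑_{i ∈ I} d_i + |⋂_{i ∈ I} S_i| + min_{i ∈ I} e_i ≤ k`.
The induction is on `k` plus the number of indices plus the number of available variables:

* a factor `x - X_j` or `x` common to all products is cancelled (`of_factor`);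
* a proper set `I` of at least two indices with equality in the condition is replaced by a single
  product, the common divisor of those indexed by `I` (`of_merge`);
* if there is no such `I`, take `i₀` with `e_{i₀} = 0`. When some available `j` is not in
  `S_{i₀}`, set `X_j = 0`, which turns `x - X_j` into `x` (`of_specialize`). Otherwise every other
  product is divisible by `x`, so `q_{i₀}` is too, and a factor `x` is cancelled (`of_peel`).
-/

/-! ### Products of linear factors and the intersection condition -/

open Polynomial in
/-- The product `x ^ e * ∏_{j ∈ S} (x - X_j)`, in one variable `x` over the polynomial ring in the
indeterminates `X_j`. -/
noncomputable def gmPoly {F σ : Type*} [Field F] (S : Finset σ) (e : ℕ) :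
    Polynomial (MvPolynomial σ F) :=
  X ^ e * ∏ j ∈ S, (X - C (MvPolynomial.X j))

/-- The intersection condition at level `k`, for data `(S i, e i)` indexed by `i ∈ T`, with
variables in `A`. The number `d i` is `k - |S i| - e i`, recorded separately to avoid truncated
subtraction. Instead of `⋂ i ∈ I, S i` and `min i ∈ I, e i`, the bound `le` is stated for every
set `D` and number `c` below all the `S i` and `e i`. -/
structure GMAdmissible {σ ι : Type*} (k : ℕ) (A : Finset σ) (T : Finset ι)
    (S : ι → Finset σ) (e d : ι → ℕ) : Prop where
  subset : ∀ i ∈ T, S i ⊆ A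
  sum_eq : ∀ i ∈ T, d i + (S i).card + e i = k
  le : ∀ I ⊆ T, I.Nonempty → ∀ (D : Finset σ) (c : ℕ), (∀ i ∈ I, D ⊆ S i) →
    (∀ i ∈ I, c ≤ e i) → ∑ i ∈ I, d i + D.card + c ≤ k

/-- The polynomials `x ^ l * gmPoly (S i) (e i)`, for `i ∈ T` and `l < d i`, are linearly
independent over the ring of indeterminates: there is no nontrivial relation with polynomial
coefficients `q i` of degree less than `d i`. -/
def GMIndep (F : Type*) {σ ι : Type*} [Field F] (T : Finset ι)
    (S : ι → Finset σ) (e d : ι → ℕ) : Prop :=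
  ∀ q : ι → Polynomial (MvPolynomial σ F), (∀ i ∈ T, (q i).degree < (d i : WithBot ℕ)) →
    ∑ i ∈ T, q i * gmPoly (S i) (e i) = 0 → ∀ i ∈ T, q i = 0

section
variable {F σ ι : Type*} [Field F] {k : ℕ} {A : Finset σ} {T : Finset ι}
  {S : ι → Finset σ} {e d : ι → ℕ}

theorem gmPoly_succ (S : Finset σ) (e : ℕ) :
    (gmPoly S (e + 1) : Polynomial (MvPolynomial σ F)) = Polynomial.X * gmPoly S e := by
  simp only [gmPoly]; ring

theorem gmPoly_erase [DecidableEq σ] {S : Finset σ} {j : σ} (hj : j ∈ S) (e : ℕ) :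
    (gmPoly S e : Polynomial (MvPolynomial σ F)) =
      (Polynomial.X - Polynomial.C (MvPolynomial.X j)) * gmPoly (S.erase j) e := by
  simp only [gmPoly]
  rw [← Finset.mul_prod_erase S _ hj]; ring

theorem gmPoly_dvd [DecidableEq σ] {S D : Finset σ} {e c : ℕ} (hS : D ⊆ S) (he : c ≤ e) :
    (gmPoly S e : Polynomial (MvPolynomial σ F)) =
      gmPoly D c * gmPoly (S \ D) (e - c) := by
  simp only [gmPoly]
  rw [← Finset.prod_sdiff hS, ← Nat.sub_add_cancel he, pow_add]
  simp only [Nat.add_sub_cancel]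
  ring

theorem gmPoly_monic (S : Finset σ) (e : ℕ) :
    (gmPoly S e : Polynomial (MvPolynomial σ F)).Monic :=
  (Polynomial.monic_X_pow e).mul
    (Polynomial.monic_prod_of_monic _ _ fun _ _ => Polynomial.monic_X_sub_C _)

theorem gmPoly_natDegree (S : Finset σ) (e : ℕ) :
    (gmPoly S e : Polynomial (MvPolynomial σ F)).natDegree = e + S.card := by
  rw [gmPoly, Polynomial.Monic.natDegree_mul (Polynomial.monic_X_pow e)
    (Polynomial.monic_prod_of_monic _ _ fun _ _ => Polynomial.monic_X_sub_C _),
    Polynomial.natDegree_prod_of_monic _ _ fun _ _ => Polynomial.monic_X_sub_C _]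
  simp

theorem GMAdmissible.mono {T' : Finset ι} (h : GMAdmissible k A T S e d) (hT : T' ⊆ T) :
    GMAdmissible k A T' S e d where
  subset i hi := h.subset i (hT hi)
  sum_eq i hi := h.sum_eq i (hT hi)
  le I hI := h.le I (hI.trans hT)

/-! ### Dropping trivial indices and cancelling common factors -/

theorem GMIndep.of_erase [DecidableEq ι] {i : ι} (hi : d i = 0)
    (h : GMIndep F (T.erase i) S e d) : GMIndep F T S e d := by
  intro q hq hsum
  by_cases hiT : i ∈ T
  · have h0 : q i = 0 := by
      have := hq i hiT
      rw [hi] at this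
      rw [← Polynomial.degree_eq_bot]
      exact Nat.WithBot.lt_zero_iff.mp this
    have key := h q (fun i' hi' => hq i' (Finset.mem_of_mem_erase hi')) (by
      rw [← Finset.add_sum_erase T _ hiT, h0, zero_mul, zero_add] at hsum
      exact hsum)
    intro i' hi'
    by_cases hii : i' = i
    · rw [hii, h0]
    · exact key i' (Finset.mem_erase.mpr ⟨hii, hi'⟩)
  · rw [Finset.erase_eq_of_notMem hiT] at h
    exact h q hq hsum

theorem GMIndep.of_factor {S' : ι → Finset σ} {e' : ι → ℕ}
    {L : Polynomial (MvPolynomial σ F)} (hL : L ≠ 0)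
    (hfac : ∀ i ∈ T, gmPoly (S i) (e i) = L * gmPoly (S' i) (e' i))
    (h : GMIndep F T S' e' d) : GMIndep F T S e d := by
  intro q hq hsum
  refine h q hq ?_
  have : L * ∑ i ∈ T, q i * gmPoly (S' i) (e' i) = 0 := by
    rw [Finset.mul_sum, ← hsum]
    refine Finset.sum_congr rfl fun i hi => ?_
    rw [hfac i hi]; ring
  exact (mul_eq_zero.mp this).resolve_left hL

theorem GMAdmissible.erase_coord [DecidableEq σ] {j : σ}
    (h : GMAdmissible (k + 1) A T S e d) (hj : ∀ i ∈ T, j ∈ S i) :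
    GMAdmissible k A T (fun i => (S i).erase j) e d where
  subset i hi := (Finset.erase_subset _ _).trans (h.subset i hi)
  sum_eq i hi := by
    have := h.sum_eq i hi
    have := Finset.card_erase_add_one (hj i hi)
    lia
  le I hI hne D c hD hc := by
    obtain ⟨i₀, hi₀⟩ := hne
    have hjD : j ∉ D := fun hjD => by simpa using hD i₀ hi₀ hjD
    have := h.le I hI ⟨i₀, hi₀⟩ (insert j D) c (fun i hi => Finset.insert_subset (hj i (hI hi))
      ((hD i hi).trans (Finset.erase_subset _ _))) hc
    rw [Finset.card_insert_of_notMem hjD] at this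
    lia

theorem GMAdmissible.pred_exponent (h : GMAdmissible (k + 1) A T S e d)
    (he : ∀ i ∈ T, 1 ≤ e i) : GMAdmissible k A T S (fun i => e i - 1) d where
  subset := h.subset
  sum_eq i hi := by
    have := h.sum_eq i hi
    have := he i hi
    lia
  le I hI hne D c hD hc := by
    have := h.le I hI hne D (c + 1) hD (fun i hi => by
      have := hc i hi
      have := he i (hI hi)
      lia)
    lia

/-! ### Merging a tight set of indices -/

/-- Replacing a tight set `I` by a single datum `(D, c)`, stored at the index `i₀ ∈ I`, preserves
the condition: a set containing the new datum has the same sum of the `d i` as the set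
obtained by adding all of `I`. -/
theorem GMAdmissible.merge [DecidableEq ι] (h : GMAdmissible k A T S e d) {I : Finset ι}
    (hIT : I ⊆ T) {i₀ : ι} (hi₀ : i₀ ∈ I) {D : Finset σ} {c : ℕ}
    (hD : ∀ i ∈ I, D ⊆ S i) (hc : ∀ i ∈ I, c ≤ e i)
    (htight : ∑ i ∈ I, d i + D.card + c = k) :
    GMAdmissible k A (insert i₀ (T \ I)) (Function.update S i₀ D) (Function.update e i₀ c)
      (Function.update d i₀ (∑ i ∈ I, d i)) where
  subset i hi := by
    by_cases hii : i = i₀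
    · subst hii
      simpa using (hD i hi₀).trans (h.subset i (hIT hi₀))
    · simp only [Finset.mem_insert, hii, Finset.mem_sdiff, false_or] at hi
      simpa [hii] using h.subset i hi.1
  sum_eq i hi := by
    by_cases hii : i = i₀
    · subst hii
      simpa using htight
    · simp only [Finset.mem_insert, hii, Finset.mem_sdiff, false_or] at hi
      simpa [hii] using h.sum_eq i hi.1
  le J hJ hne D' c' hD' hc' := by
    have hmem : ∀ i ∈ J, i ≠ i₀ → i ∈ T ∧ i ∉ I := by
      intro i hi hii
      simpa [hii] using hJ hi
    by_cases hJ₀ : i₀ ∈ J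
    · have hDD : D' ⊆ D := by simpa using hD' i₀ hJ₀
      have hcc : c' ≤ c := by simpa using hc' i₀ hJ₀
      have hdisj : Disjoint (J.erase i₀) I := by
        rw [Finset.disjoint_left]
        intro i hi
        rw [Finset.mem_erase] at hi
        exact (hmem i hi.2 hi.1).2
      have hle := h.le (J.erase i₀ ∪ I) (by
        refine Finset.union_subset (fun i hi => ?_) hIT
        rw [Finset.mem_erase] at hi
        exact (hmem i hi.2 hi.1).1) ⟨i₀, Finset.mem_union_right _ hi₀⟩ D' c' (by
        intro i hi
        rcases Finset.mem_union.mp hi with hi | hi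
        · rw [Finset.mem_erase] at hi
          simpa [hi.1] using hD' i hi.2
        · exact hDD.trans (hD i hi)) (by
        intro i hi
        rcases Finset.mem_union.mp hi with hi | hi
        · rw [Finset.mem_erase] at hi
          simpa [hi.1] using hc' i hi.2
        · exact hcc.trans (hc i hi))
      rw [Finset.sum_union hdisj] at hle
      rw [← Finset.sum_erase_add J _ hJ₀, Function.update_self,
        Finset.sum_congr rfl (g := d) (fun i hi => Function.update_of_ne
          (Finset.ne_of_mem_erase hi) _ _)]
      exact hle
    · have hne' : ∀ i ∈ J, i ≠ i₀ := fun i hi hii => hJ₀ (hii ▸ hi)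
      rw [Finset.sum_congr rfl (g := d) (fun i hi => Function.update_of_ne (hne' i hi) _ _)]
      refine h.le J (fun i hi => (hmem i hi (hne' i hi)).1) hne D' c' (fun i hi => ?_)
        (fun i hi => ?_)
      · simpa [hne' i hi] using hD' i hi
      · simpa [hne' i hi] using hc' i hi

/-- In a relation, the part indexed by `I` is `g * gmPoly D c` with `deg g < ∑ i ∈ I, d i`.
Independence after merging gives `g = 0`, and independence on `I` then applies. -/
theorem GMIndep.of_merge [DecidableEq ι] (h : GMAdmissible k A T S e d) {I : Finset ι}
    (hIT : I ⊆ T) {i₀ : ι} (hi₀ : i₀ ∈ I) {D : Finset σ} {c : ℕ}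
    (hD : ∀ i ∈ I, D ⊆ S i) (hc : ∀ i ∈ I, c ≤ e i)
    (htight : ∑ i ∈ I, d i + D.card + c = k)
    (hI : GMIndep F I S e d)
    (hM : GMIndep F (insert i₀ (T \ I)) (Function.update S i₀ D) (Function.update e i₀ c)
      (Function.update d i₀ (∑ i ∈ I, d i))) : GMIndep F T S e d := by
  classical
  intro q hq hsum
  set g : Polynomial (MvPolynomial σ F) :=
    ∑ i ∈ I, q i * gmPoly (S i \ D) (e i - c) with hg
  have hgsum : ∑ i ∈ I, q i * gmPoly (S i) (e i) = g * gmPoly D c := by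
    rw [hg, Finset.sum_mul]
    refine Finset.sum_congr rfl fun i hi => ?_
    rw [gmPoly_dvd (hD i hi) (hc i hi)]; ring
  have hgdeg : g.degree < ((∑ i ∈ I, d i : ℕ) : WithBot ℕ) := by
    rw [← Polynomial.mem_degreeLT]
    refine Submodule.sum_mem _ fun i hi => ?_
    rw [Polynomial.mem_degreeLT]
    by_cases hqi : q i = 0
    · rw [hqi, zero_mul, Polynomial.degree_zero]; exact WithBot.bot_lt_coe _
    have h1 := hq i (hIT hi)
    rw [Polynomial.degree_eq_natDegree hqi, Nat.cast_lt] at h1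
    refine lt_of_le_of_lt Polynomial.degree_le_natDegree ?_
    rw [Nat.cast_lt, mul_comm, (gmPoly_monic _ _).natDegree_mul' hqi, gmPoly_natDegree,
      Finset.card_sdiff_of_subset (hD i hi)]
    have := h.sum_eq i (hIT hi)
    have := hc i hi
    have := Finset.card_le_card (hD i hi)
    lia
  have hi₀' : i₀ ∉ T \ I := by simp [hi₀]
  have hne : ∀ i ∈ T \ I, i ≠ i₀ := fun i hi hii => hi₀' (hii ▸ hi)
  have key := hM (Function.update q i₀ g) (by
    intro i hi
    rcases Finset.mem_insert.mp hi with rfl | hi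
    · simpa using hgdeg
    · simpa [hne i hi] using hq i (Finset.mem_sdiff.mp hi).1) (by
    rw [Finset.sum_insert hi₀']
    simp only [Function.update_self]
    rw [← hgsum, ← hsum, ← Finset.sum_sdiff hIT, add_comm]
    congr 1
    refine Finset.sum_congr rfl fun i hi => ?_
    simp [hne i hi])
  have hg0 : g = 0 := by simpa using key i₀ (Finset.mem_insert_self _ _)
  intro i hi
  by_cases hiI : i ∈ I
  · exact hI q (fun i hi => hq i (hIT hi)) (by rw [hgsum, hg0, zero_mul]) i hiI
  · have hmem : i ∈ T \ I := Finset.mem_sdiff.mpr ⟨hi, hiI⟩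
    simpa [hne i hmem] using key i (Finset.mem_insert_of_mem hmem)

/-! ### Specializing a variable to zero -/

/-- Moving `j` from the sets to the exponents raises the minimum of the exponents on `I` by at most
one. This is harmless when `I` is not tight, when `I` is a singleton, and when `I` is everything,
since the new exponent at `i₀` is still zero. -/
theorem GMAdmissible.specialize [DecidableEq σ] (h : GMAdmissible k A T S e d)
    (hnt : ∀ I ⊆ T, 1 < I.card → I.card < T.card → ∀ (D : Finset σ) (c : ℕ),
      (∀ i ∈ I, D ⊆ S i) → (∀ i ∈ I, c ≤ e i) → ∑ i ∈ I, d i + D.card + c ≠ k)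
    {i₀ : ι} (hi₀ : i₀ ∈ T) (he : e i₀ = 0) {j : σ} (hj : j ∉ S i₀) :
    GMAdmissible k (A.erase j) T (fun i => (S i).erase j)
      (fun i => if j ∈ S i then e i + 1 else e i) d := by
  have hsum : ∀ i ∈ T, d i + ((S i).erase j).card + (if j ∈ S i then e i + 1 else e i) = k := by
    intro i hi
    have := h.sum_eq i hi
    split_ifs with hji
    · have := Finset.card_erase_add_one hji
      lia
    · rw [Finset.erase_eq_of_notMem hji]
      lia
  refine ⟨fun i hi => Finset.erase_subset_erase _ (h.subset i hi), hsum, ?_⟩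
  intro I hI hne D c hD hc
  have hD' : ∀ i ∈ I, D ⊆ S i := fun i hi => (hD i hi).trans (Finset.erase_subset _ _)
  have hc' : ∀ i ∈ I, c - 1 ≤ e i := by
    intro i hi
    have := hc i hi
    split_ifs at this <;> lia
  have hle := h.le I hI hne D (c - 1) hD' hc'
  rcases Nat.eq_zero_or_pos c with rfl | hcpos
  · exact hle
  have hpos := hne.card_pos
  rcases Nat.lt_or_ge 1 I.card with h1 | h1
  · rcases (Finset.card_le_card hI).lt_or_eq with h2 | h2
    · have := hnt I hI h1 h2 D (c - 1) hD' hc'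
      lia
    · have hIT := Finset.eq_of_subset_of_card_le hI h2.ge
      have := hc i₀ (hIT ▸ hi₀)
      simp only [hj, if_false, he] at this
      lia
  · obtain ⟨i, rfl⟩ := Finset.card_eq_one.mp (le_antisymm h1 hpos)
    have hi := Finset.mem_singleton_self i
    have := hsum i (hI hi)
    have := Finset.card_le_card (hD i hi)
    have := hc i hi
    rw [Finset.sum_singleton]
    lia

open MvPolynomial in
/-- The substitution `X_j ↦ 0`, all other variables being fixed. -/
noncomputable def killVar [DecidableEq σ] (j : σ) : MvPolynomial σ F →+* MvPolynomial σ F :=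
  (aeval (fun i => if i = j then 0 else X i) : MvPolynomial σ F →ₐ[F] MvPolynomial σ F).toRingHom

theorem X_dvd_sub_killVar [DecidableEq σ] (j : σ) (f : MvPolynomial σ F) :
    MvPolynomial.X j ∣ f - killVar j f := by
  induction f using MvPolynomial.induction_on with
  | C a => simp [killVar, MvPolynomial.algebraMap_eq]
  | add p q hp hq =>
    rw [map_add, add_sub_add_comm]
    exact dvd_add hp hq
  | mul_X p i hp =>
    have : p * MvPolynomial.X i - killVar j (p * MvPolynomial.X i) =
        (p - killVar j p) * MvPolynomial.X i +
          killVar j p * (MvPolynomial.X i - killVar j (MvPolynomial.X i)) := by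
      rw [map_mul]; ring
    rw [this]
    refine dvd_add (hp.mul_right _) (Dvd.dvd.mul_left ?_ _)
    by_cases hij : i = j <;> simp [killVar, hij]

theorem map_killVar_gmPoly [DecidableEq σ] (j : σ) (S : Finset σ) (e : ℕ) :
    (gmPoly S e : Polynomial (MvPolynomial σ F)).map (killVar j) =
      gmPoly (S.erase j) (if j ∈ S then e + 1 else e) := by
  have hgen : ∀ (S : Finset σ), j ∉ S →
      (gmPoly S e : Polynomial (MvPolynomial σ F)).map (killVar j) = gmPoly S e := by
    intro S hS
    simp only [gmPoly, Polynomial.map_mul, Polynomial.map_pow, Polynomial.map_X,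
      Polynomial.map_prod, Polynomial.map_sub, Polynomial.map_C]
    congr 1
    refine Finset.prod_congr rfl fun i hi => ?_
    have : i ≠ j := fun h => hS (h ▸ hi)
    simp [killVar, this]
  split_ifs with hj
  · rw [gmPoly_erase hj, Polynomial.map_mul, hgen _ (Finset.notMem_erase _ _), gmPoly_succ]
    simp [killVar]
  · rw [hgen S hj, Finset.erase_eq_of_notMem hj]

/-- Every coefficient of a relation vanishes under `X_j ↦ 0`, hence is divisible by `X_j`. Dividing
gives another relation, so the coefficients are divisible by all powers of `X_j`. -/
theorem GMIndep.of_specialize [DecidableEq σ] {j : σ}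
    (h : GMIndep F T (fun i => (S i).erase j)
      (fun i => if j ∈ S i then e i + 1 else e i) d) : GMIndep F T S e d := by
  have hX : (MvPolynomial.X j : MvPolynomial σ F) ≠ 0 := MvPolynomial.X_ne_zero j
  have key : ∀ N : ℕ, ∀ q : ι → Polynomial (MvPolynomial σ F),
      (∀ i ∈ T, (q i).degree < (d i : WithBot ℕ)) →
      ∑ i ∈ T, q i * gmPoly (S i) (e i) = 0 →
      ∀ i ∈ T, Polynomial.C (MvPolynomial.X j ^ N) ∣ q i := by
    intro N
    induction N with
    | zero => intro q _ _ i _; simp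
    | succ N ih =>
      intro q hq hsum
      have hkill : ∀ i ∈ T, (q i).map (killVar j) = 0 := by
        refine h (fun i => (q i).map (killVar j)) (fun i hi => ?_) ?_
        · exact Polynomial.degree_map_le.trans_lt (hq i hi)
        · have := congrArg (Polynomial.map (killVar j)) hsum
          simpa [Polynomial.map_sum, Polynomial.map_mul, map_killVar_gmPoly] using this
      have hdvd : ∀ i, ∃ r, i ∈ T → q i = Polynomial.C (MvPolynomial.X j) * r := by
        intro i
        by_cases hi : i ∈ T
        · have : Polynomial.C (MvPolynomial.X j) ∣ q i := by
            rw [Polynomial.C_dvd_iff_dvd_coeff]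
            intro l
            have h1 := X_dvd_sub_killVar j ((q i).coeff l)
            rwa [← Polynomial.coeff_map, hkill i hi, Polynomial.coeff_zero, sub_zero] at h1
          obtain ⟨r, hr⟩ := this
          exact ⟨r, fun _ => hr⟩
        · exact ⟨0, fun hi' => absurd hi' hi⟩
      choose r hr using hdvd
      have hr' := ih r (fun i hi => by
        have := hq i hi
        rwa [hr i hi, Polynomial.degree_C_mul hX] at this) (by
        have : Polynomial.C (MvPolynomial.X j) * ∑ i ∈ T, r i * gmPoly (S i) (e i) = 0 := by
          rw [Finset.mul_sum, ← hsum]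
          refine Finset.sum_congr rfl fun i hi => ?_
          rw [hr i hi]; ring
        exact (mul_eq_zero.mp this).resolve_left (Polynomial.C_ne_zero.mpr hX))
      intro i hi
      rw [hr i hi, pow_succ', Polynomial.C_mul]
      exact mul_dvd_mul_left _ (hr' i hi)
  intro q hq hsum i hi
  ext1 l
  by_contra hne
  have hfin : FiniteMultiplicity (MvPolynomial.X j : MvPolynomial σ F) ((q i).coeff l) :=
    FiniteMultiplicity.of_prime_left (MvPolynomial.X_prime) hne
  obtain ⟨N, hN⟩ := hfin
  exact hN ((Polynomial.C_dvd_iff_dvd_coeff _ _).mp (key (N + 1) q hq hsum i hi) l)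

/-! ### Cancelling `x` when exactly one product is not divisible by it -/

theorem GMAdmissible.peel [DecidableEq ι] (h : GMAdmissible (k + 1) A T S e d) {i₀ : ι}
    (hi₀ : i₀ ∈ T) (he₀ : e i₀ = 0) (hd₀ : 1 ≤ d i₀) (he : ∀ i ∈ T, i ≠ i₀ → 1 ≤ e i) :
    GMAdmissible k A T S (fun i => e i - 1) (Function.update d i₀ (d i₀ - 1)) where
  subset := h.subset
  sum_eq i hi := by
    have := h.sum_eq i hi
    by_cases hii : i = i₀
    · subst hii
      simp only [Function.update_self]
      lia
    · have := he i hi hii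
      simp only [Function.update_of_ne hii]
      lia
  le I hI hne D c hD hc := by
    by_cases hmem : i₀ ∈ I
    · have hc0 : c = 0 := by
        have := hc i₀ hmem
        lia
      have := h.le I hI hne D 0 hD (fun _ _ => Nat.zero_le _)
      rw [← Finset.add_sum_erase I _ hmem] at this
      rw [← Finset.add_sum_erase I _ hmem, Function.update_self,
        Finset.sum_congr rfl (g := d) (fun i hi => Function.update_of_ne
          (Finset.ne_of_mem_erase hi) _ _)]
      lia
    · have hne' : ∀ i ∈ I, i ≠ i₀ := fun i hi hii => hmem (hii ▸ hi)
      rw [Finset.sum_congr rfl (g := d) (fun i hi => Function.update_of_ne (hne' i hi) _ _)]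
      have := h.le I hI hne D (c + 1) hD (fun i hi => by
        have := hc i hi
        have := he i (hI hi) (hne' i hi)
        lia)
      lia

/-- Setting `x = 0` in a relation leaves only the term at `i₀`, so `x` divides `q i₀`. -/
theorem GMIndep.of_peel [DecidableEq ι] {i₀ : ι}
    (hi₀ : i₀ ∈ T) (he₀ : e i₀ = 0) (hd₀ : 1 ≤ d i₀) (he : ∀ i ∈ T, i ≠ i₀ → 1 ≤ e i)
    (h : GMIndep F T S (fun i => e i - 1) (Function.update d i₀ (d i₀ - 1))) :
    GMIndep F T S e d := by
  intro q hq hsum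
  have hfac : ∀ i ∈ T, i ≠ i₀ → (gmPoly (S i) (e i) : Polynomial (MvPolynomial σ F)) =
      Polynomial.X * gmPoly (S i) (e i - 1) := by
    intro i hi hii
    rw [← gmPoly_succ, Nat.sub_add_cancel (he i hi hii)]
  have hq0 : (q i₀).eval 0 = 0 := by
    have h1 := congrArg (Polynomial.eval 0) hsum
    rw [Polynomial.eval_finsetSum, Finset.sum_eq_single_of_mem i₀ hi₀ (fun i hi hii => by
      rw [hfac i hi hii]; simp), Polynomial.eval_mul, Polynomial.eval_zero] at h1
    refine (mul_eq_zero.mp h1).resolve_right ?_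
    rw [he₀, gmPoly, pow_zero, one_mul, Polynomial.eval_prod, ← ne_eq,
      Finset.prod_ne_zero_iff]
    intro j _
    simp [MvPolynomial.X_ne_zero]
  obtain ⟨r, hr⟩ : Polynomial.X ∣ q i₀ := by
    rwa [Polynomial.X_dvd_iff, Polynomial.coeff_zero_eq_eval_zero]
  have key := h (Function.update q i₀ r) (by
    intro i hi
    by_cases hii : i = i₀
    · subst hii
      simp only [Function.update_self]
      have := hq i hi
      by_cases hr0 : r = 0
      · rw [hr0, Polynomial.degree_zero]; exact WithBot.bot_lt_coe _
      · rw [hr, Polynomial.degree_mul, Polynomial.degree_X,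
          Polynomial.degree_eq_natDegree hr0] at this
        rw [Polynomial.degree_eq_natDegree hr0, Nat.cast_lt]
        have : 1 + r.natDegree < d i := by exact_mod_cast this
        lia
    · simpa [hii] using hq i hi) (by
    have : Polynomial.X * ∑ i ∈ T, Function.update q i₀ r i * gmPoly (S i) (e i - 1) = 0 := by
      rw [Finset.mul_sum, ← hsum]
      refine Finset.sum_congr rfl fun i hi => ?_
      by_cases hii : i = i₀
      · subst hii
        rw [Function.update_self, hr, he₀]
        ring
      · rw [Function.update_of_ne hii, hfac i hi hii]
        ring
    exact (mul_eq_zero.mp this).resolve_left Polynomial.X_ne_zero)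
  intro i hi
  have := key i hi
  by_cases hii : i = i₀
  · subst hii
    rw [Function.update_self] at this
    rw [hr, this, mul_zero]
  · rwa [Function.update_of_ne hii] at this

/-! ### The independence theorem -/

/-- The intersection condition implies independence of the associated polynomials. -/
theorem GMAdmissible.indep (h : GMAdmissible k A T S e d) : GMIndep F T S e d := by
  classical
  induction hN : k + T.card + A.card using Nat.strong_induction_on
    generalizing k A T S e d with
  | _ N ih =>
  subst hN
  by_cases hd : ∃ i ∈ T, d i = 0
  · obtain ⟨i, hi, hdi⟩ := hd
    refine GMIndep.of_erase hdi (ih _ ?_ (h.mono (Finset.erase_subset i T)) rfl)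
    have := Finset.card_erase_lt_of_mem hi
    lia
  push Not at hd
  rcases T.eq_empty_or_nonempty with rfl | ⟨i₁, hi₁⟩
  · intro q _ _ i hi
    simp at hi
  obtain ⟨k, rfl⟩ : ∃ k', k = k' + 1 := by
    have := h.sum_eq i₁ hi₁
    have := hd i₁ hi₁
    exact ⟨k - 1, by lia⟩
  by_cases hcommon : ∃ j, ∀ i ∈ T, j ∈ S i
  · obtain ⟨j, hj⟩ := hcommon
    exact GMIndep.of_factor (Polynomial.X_sub_C_ne_zero (MvPolynomial.X j))
      (fun i hi => gmPoly_erase (hj i hi) _) (ih _ (by lia) (h.erase_coord hj) rfl)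
  by_cases hpos : ∀ i ∈ T, 1 ≤ e i
  · refine GMIndep.of_factor Polynomial.X_ne_zero (fun i hi => ?_)
      (ih _ (by lia) (h.pred_exponent hpos) rfl)
    rw [← gmPoly_succ, Nat.sub_add_cancel (hpos i hi)]
  by_cases hnt : ∀ I ⊆ T, 1 < I.card → I.card < T.card → ∀ (D : Finset σ) (c : ℕ),
      (∀ i ∈ I, D ⊆ S i) → (∀ i ∈ I, c ≤ e i) → ∑ i ∈ I, d i + D.card + c ≠ k + 1
  · push Not at hpos
    obtain ⟨i₀, hi₀, he₀⟩ := hpos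
    replace he₀ : e i₀ = 0 := by lia
    by_cases hA : ∃ j ∈ A, j ∉ S i₀
    · obtain ⟨j, hjA, hj⟩ := hA
      refine GMIndep.of_specialize (j := j) (ih _ ?_ (h.specialize hnt hi₀ he₀ hj) rfl)
      have := Finset.card_erase_lt_of_mem hjA
      lia
    · push Not at hA
      have hd₀ : 1 ≤ d i₀ := Nat.one_le_iff_ne_zero.mpr (hd i₀ hi₀)
      have he : ∀ i ∈ T, i ≠ i₀ → 1 ≤ e i := by
        intro i hi hii
        by_contra hlt
        -- Here `S i ⊆ A = S i₀`, and the condition for the pair would force `d i₀ = 0`.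
        have hsub : S i ⊆ S i₀ := (h.subset i hi).trans hA
        have h1 := h.le {i, i₀} (by
          intro l hl
          rcases Finset.mem_insert.mp hl with rfl | hl
          · exact hi
          · rwa [Finset.mem_singleton.mp hl]) ⟨i, by simp⟩ (S i) 0 (by simpa using hsub)
          (by simp)
        rw [Finset.sum_pair hii] at h1
        have := h.sum_eq i hi
        lia
      exact GMIndep.of_peel hi₀ he₀ hd₀ he (ih _ (by lia) (h.peel hi₀ he₀ hd₀ he) rfl)
  · push Not at hnt
    obtain ⟨I, hI, hI1, hI2, D, c, hD, hc, htight⟩ := hnt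
    obtain ⟨i₀, hi₀⟩ : I.Nonempty := Finset.card_pos.mp (by lia)
    refine GMIndep.of_merge h hI hi₀ hD hc htight (ih _ (by lia) (h.mono hI) rfl)
      (ih _ ?_ (h.merge hI hi₀ hD hc htight) rfl)
    have h1 := Finset.card_insert_le i₀ (T \ I)
    rw [Finset.card_sdiff_of_subset hI] at h1
    lia

end

/-! ### Degree bounds and the determinant -/

theorem degreeOf_det_le {R σ : Type*} [CommRing R] {m : ℕ}
    (M : Matrix (Fin m) (Fin m) (MvPolynomial σ R)) (j : σ) (b : Fin m → ℕ)
    (h : ∀ i l, (M i l).degreeOf j ≤ b i) : M.det.degreeOf j ≤ ∑ i, b i := by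
  rw [← Matrix.det_transpose, Matrix.det_apply]
  refine (MvPolynomial.degreeOf_sum_le _ _ _).trans (Finset.sup_le fun p _ => ?_)
  have hprod : (∏ i, M.transpose (p i) i).degreeOf j ≤ ∑ i, b i :=
    (MvPolynomial.degreeOf_prod_le _ _ _).trans (Finset.sum_le_sum fun i _ => h i (p i))
  rcases Int.units_eq_one_or (Equiv.Perm.sign p) with hs | hs
  · rwa [hs, one_smul]
  · rw [hs, Units.neg_smul, one_smul, ← zero_sub]
    exact (MvPolynomial.degreeOf_sub_le _ _ _).trans (by simpa using hprod)

/-- The coefficients of `∏_{j ∈ S} (x - X_j)` are multilinear in the variables indexed by `S`. -/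
theorem degreeOf_coeff_gmPoly_le {F σ : Type*} [Field F] [DecidableEq σ] (S : Finset σ) (j : σ) :
    ∀ l, ((gmPoly S 0 : Polynomial (MvPolynomial σ F)).coeff l).degreeOf j ≤
      if j ∈ S then 1 else 0 := by
  induction S using Finset.induction_on with
  | empty =>
    intro l
    simp only [gmPoly, pow_zero, one_mul, Finset.prod_empty, Polynomial.coeff_one]
    split_ifs <;> simp
  | insert a S ha ih =>
    intro l
    rw [gmPoly_erase (Finset.mem_insert_self a S), Finset.erase_insert ha]
    have hmul : ∀ l, (MvPolynomial.X a * (gmPoly S 0 : Polynomial (MvPolynomial σ F)).coeff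
        l).degreeOf j ≤ if j ∈ insert a S then 1 else 0 := by
      intro l
      refine (MvPolynomial.degreeOf_mul_le _ _ _).trans ?_
      have := ih l
      rw [MvPolynomial.degreeOf_X]
      by_cases hja : j = a
      · subst hja
        simp only [ha, if_false] at this
        simp [Nat.le_zero.mp this]
      · simpa [hja] using this
    have hmono : ∀ l, ((gmPoly S 0 : Polynomial (MvPolynomial σ F)).coeff l).degreeOf j ≤
        if j ∈ insert a S then 1 else 0 := by
      intro l
      refine (ih l).trans ?_
      by_cases hj : j ∈ S <;> simp [hj]
    rw [sub_mul, Polynomial.coeff_sub, Polynomial.coeff_C_mul]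
    refine (MvPolynomial.degreeOf_sub_le _ _ _).trans (max_le ?_ (hmul l))
    cases l with
    | zero => simp
    | succ l => rw [Polynomial.coeff_X_mul]; exact hmono l

theorem det_coeff_gmPoly_ne_zero {n k : ℕ} (hk : 1 ≤ k) (Z : Fin k → Finset (Fin n))
    (hZ : ∀ i, (Z i).card = k - 1)
    (hint : ∀ I : Finset (Fin k), I.Nonempty → (I.inf Z).card ≤ k - I.card)
    (F : Type*) [Field F] :
    (Matrix.of fun i l : Fin k =>
      (gmPoly (Z i) 0 : Polynomial (MvPolynomial (Fin n) F)).coeff l).det ≠ 0 := by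
  have hadm : GMAdmissible k Finset.univ Finset.univ Z (fun _ => 0) (fun _ => 1) := by
    refine ⟨fun _ _ => Finset.subset_univ _, fun i _ => ?_, fun I _ hne D c hD hc => ?_⟩
    · rw [hZ]; lia
    · obtain ⟨i, hi⟩ := hne
      have hc0 := hc i hi
      have h1 := Finset.card_le_card (Finset.le_inf hD : D ≤ I.inf Z)
      have h2 := hint I ⟨i, hi⟩
      have h3 := Finset.card_le_univ I
      rw [Fintype.card_fin] at h3
      simp only [Finset.sum_const, smul_eq_mul, mul_one]
      lia
  have hind : GMIndep F Finset.univ Z (fun _ => 0) (fun _ => 1) := hadm.indep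
  intro hdet
  obtain ⟨v, hv, hvM⟩ := Matrix.exists_vecMul_eq_zero_iff.mpr hdet
  refine hv (funext fun i => ?_)
  have := hind (fun i => Polynomial.C (v i))
    (fun i _ => Polynomial.degree_C_le.trans_lt (by norm_num)) (by
    ext1 l
    simp only [Polynomial.finsetSum_coeff, Polynomial.coeff_C_mul, Polynomial.coeff_zero]
    by_cases hl : l < k
    · simpa [Matrix.vecMul, dotProduct] using congrFun hvM ⟨l, hl⟩
    · refine Finset.sum_eq_zero fun i _ => ?_
      rw [Polynomial.coeff_eq_zero_of_natDegree_lt, mul_zero]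
      rw [gmPoly_natDegree, hZ]
      lia) i (Finset.mem_univ i)
  simpa using this

/-- The Simplified GM-MDS Conjecture holds when the prescribed zero-coordinate sets
`Z i` pairwise intersect in at most one element: there is a `k × n` MDS generator
matrix over any finite field with at least `n + k - 1` elements vanishing exactly on
the prescribed positions. -/
theorem simplified_gm_mds_of_pairwise_inter (n k : ℕ) (hk : 1 ≤ k) (hkn : k ≤ n)
    (Z : Fin k → Finset (Fin n)) (hZ : ∀ i, (Z i).card = k - 1)
    (hint : ∀ I : Finset (Fin k), I.Nonempty → (I.inf Z).card ≤ k - I.card)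
    (hpair : ∀ i i' : Fin k, i ≠ i' → (Z i ∩ Z i').card ≤ 1)
    (F : Type*) [Field F] [Fintype F] (hq : n + k - 1 ≤ Fintype.card F) :
    ∃ G : Matrix (Fin k) (Fin n) F,
      (∀ i j, j ∈ Z i → G i j = 0) ∧
      (∀ s : Finset (Fin n), s.card = k →
        LinearIndependent F (fun j : s => (fun i : Fin k => G i (j : Fin n)))) := by
  classical
  set M : Matrix (Fin k) (Fin k) (MvPolynomial (Fin n) F) :=
    Matrix.of fun i l => (gmPoly (Z i) 0 : Polynomial (MvPolynomial (Fin n) F)).coeff l with hM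
  set V : Matrix (Fin n) (Fin n) (MvPolynomial (Fin n) F) :=
    Matrix.vandermonde MvPolynomial.X with hV
  -- Each `j` lies in at most `k - 1` of the sets, by `hint` for the set of all `i` with `j ∈ Z i`.
  have hMdeg : ∀ j, M.det.degreeOf j ≤ k - 1 := by
    intro j
    refine (degreeOf_det_le M j (fun i => if j ∈ Z i then 1 else 0)
      (fun i l => degreeOf_coeff_gmPoly_le (Z i) j l)).trans ?_
    rw [Finset.sum_boole, Nat.cast_id]
    rcases (Finset.univ.filter fun i => j ∈ Z i).eq_empty_or_nonempty with h0 | hne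
    · simp [h0]
    · have h1 := hint _ hne
      have h2 : 0 < ((Finset.univ.filter fun i => j ∈ Z i).inf Z).card := by
        refine Finset.card_pos.mpr ⟨j, ?_⟩
        rw [Finset.mem_inf]
        simp
      lia
  have hVdeg : ∀ j, V.det.degreeOf j ≤ n - 1 := by
    intro j
    refine (degreeOf_det_le V j (fun i => if i = j then n - 1 else 0) (fun i l => ?_)).trans ?_
    · rw [hV, Matrix.vandermonde_apply]
      by_cases hij : i = j
      · subst hij
        have := l.isLt
        rw [MvPolynomial.degreeOf_X_self_pow, if_pos rfl]
        lia
      · rw [MvPolynomial.degreeOf_X_pow_of_ne _ (Ne.symm hij)]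
        exact Nat.zero_le _
    · simp
  have hVne : V.det ≠ 0 := Matrix.det_vandermonde_ne_zero_iff.mpr (MvPolynomial.X_injective)
  obtain ⟨α, hα⟩ : ∃ α : Fin n → F, MvPolynomial.eval α (M.det * V.det) ≠ 0 := by
    by_contra! hzero
    refine mul_ne_zero (det_coeff_gmPoly_ne_zero hk Z hZ hint F) hVne
      (MvPolynomial.eq_zero_of_eval_zero_at_prod_finset _ (fun _ => Finset.univ) (fun j => ?_)
        (fun α _ => hzero α))
    have h1 := MvPolynomial.degreeOf_mul_le j M.det V.det
    have h2 := hMdeg j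
    have h3 := hVdeg j
    rw [Finset.card_univ]
    lia
  rw [map_mul] at hα
  have hMα : (M.map (MvPolynomial.eval α)).det ≠ 0 := by
    have := left_ne_zero_of_mul hα
    rwa [RingHom.map_det] at this
  have hinj : Function.Injective α := by
    have := right_ne_zero_of_mul hα
    rw [RingHom.map_det] at this
    refine Matrix.det_vandermonde_ne_zero_iff.mp ?_
    convert this using 2
    ext i l
    simp [hV, Matrix.vandermonde_apply]
  refine ⟨Matrix.of fun i j =>
    ((gmPoly (Z i) 0 : Polynomial (MvPolynomial (Fin n) F)).map (MvPolynomial.eval α)).eval (α j),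
    fun i j hj => ?_, fun s hs => ?_⟩
  · rw [Matrix.of_apply, gmPoly_erase hj]
    simp
  · set f : Fin k ≃ s := (s.equivFinOfCardEq hs).symm
    have hdet : (M.map (MvPolynomial.eval α) *
        (Matrix.vandermonde fun l => α (f l)).transpose).det ≠ 0 := by
      rw [Matrix.det_mul, Matrix.det_transpose]
      exact mul_ne_zero hMα (Matrix.det_vandermonde_ne_zero_iff.mpr
        (hinj.comp (Subtype.val_injective.comp f.injective)))
    rw [← linearIndependent_equiv f]
    have hcols := Matrix.linearIndependent_cols_of_det_ne_zero hdet
    have hfam : (M.map (MvPolynomial.eval α) *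
        (Matrix.vandermonde fun l => α (f l)).transpose).col =
        (fun (j : s) (i : Fin k) => Matrix.of (fun i j => ((gmPoly (Z i) 0 :
          Polynomial (MvPolynomial (Fin n) F)).map (MvPolynomial.eval α)).eval (α j))
          i (j : Fin n)) ∘ f := by
      funext l i
      symm
      simp only [Function.comp_apply, Matrix.of_apply, Matrix.col_apply, Matrix.mul_apply,
        Matrix.map_apply, Matrix.transpose_apply, Matrix.vandermonde_apply, hM]
      rw [Polynomial.eval_eq_sum_range' (n := k)]
      · rw [Finset.sum_range]
        simp [Polynomial.coeff_map]
      · refine Polynomial.natDegree_map_le.trans_lt ?_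
        rw [gmPoly_natDegree, hZ]
        lia
    rw [hfam] at hcols
    exact hcols
end

section
/- Fix 1 ≤ k ≤ n and a finite field F_q. Suppose that for every family Z_1,…,Z_k of (k−1)-element subsets of {1,…,n} satisfying |⋂_{i∈I} Z_i| ≤ k − |I| for all nonempty I ⊆ {1,…,k}, there exists a k×n matrix G over F_q with G_{i,j} = 0 whenever j ∈ Z_i such that every set of k columns of G is linearly independent. Then for every family R_1,…,R_k of subsets of {1,…,n} satisfying the MDS condition |⋃_{i∈I} R_i| ≥ n − k + |I| for all nonempty I ⊆ {1,…,k}, there exists a k×n matrix G over F_q such that G_{i,j} = 0 whenever j ∉ R_i and every set of k columns of G is linearly independent. (The Simplified GM-MDS Conjecture implies the GM-MDS Conjecture.) -/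
/-!
Passing to complements `Z i = (R i)ᶜ` turns the MDS condition into the intersection condition of the
simplified conjecture, so it is enough to shrink the sets `R i` to size exactly `n - k + 1` while
preserving the MDS condition (shrinking only adds zero constraints).

Put `d = n - k` and take a family `R` that is minimal for inclusion among those with
`|⋃_{i ∈ I} R i| ≥ d + |I|` for all nonempty `I`. If some `R i` had two elements `x ≠ y` and size at
least `d + 2`, then by minimality deleting `x` from `R i` violates the condition at some index set
`A`, and deleting `y` violates it at some `B`; both contain `i`. Let `U` and `V` be the two unions
after deletion. Then `U ∪ V` contains the whole union over `A ∪ B`, while `U ∩ V` contains the union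
over `(A ∩ B) \ {i}` and also `R i \ {x, y}`, so `|U ∩ V| ≥ d + |A ∩ B| - 1`. Adding up,
`|U| + |V| ≥ 2d + |A| + |B| - 1`, contradicting `|U| < d + |A|` and `|V| < d + |B|`.
-/

/-- The lower bound `d + |I|` on the size of the union over every nonempty index set `I`. With
`d = n - k` this is the MDS condition. -/
def UnionBound {ι α : Type*} [DecidableEq α] (d : ℕ) (R : ι → Finset α) : Prop :=
  ∀ I : Finset ι, I.Nonempty → d + I.card ≤ (I.biUnion R).card

/-- If deleting `x` from `R i` destroys the union bound, then the bound fails at an index set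
containing `i`; the failing union is recorded only through the sets it contains. -/
lemma UnionBound.exists_violation {ι α : Type*} [DecidableEq ι] [DecidableEq α] {d : ℕ}
    {R : ι → Finset α} (hR : UnionBound d R) {i : ι} {x : α}
    (h : ¬ UnionBound d (Function.update R i ((R i).erase x))) :
    ∃ (A : Finset ι) (U : Finset α), i ∈ A ∧ U.card < d + A.card ∧
      (∀ j ∈ A, j ≠ i → R j ⊆ U) ∧ (R i).erase x ⊆ U := by
  unfold UnionBound at h
  push Not at h
  obtain ⟨A, hA, hlt⟩ := h
  have hi : i ∈ A := by
    by_contra hi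
    have heq : A.biUnion (Function.update R i ((R i).erase x)) = A.biUnion R := by
      refine Finset.biUnion_congr rfl fun j hj => ?_
      rw [Function.update_of_ne]
      rintro rfl
      exact hi hj
    rw [heq] at hlt
    exact absurd (hR A hA) (by omega)
  refine ⟨A, _, hi, hlt, fun j hj hji => ?_, ?_⟩
  · have := Finset.subset_biUnion_of_mem (Function.update R i ((R i).erase x)) hj
    rwa [Function.update_of_ne hji] at this
  · have := Finset.subset_biUnion_of_mem (Function.update R i ((R i).erase x)) hi
    rwa [Function.update_self] at this

/-- The submodularity step: from a set of size at least `d + 2`, one of any two distinct elements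
can be deleted without destroying the union bound. -/
lemma UnionBound.erase_or_erase {ι α : Type*} [DecidableEq ι] [DecidableEq α] {d : ℕ}
    {R : ι → Finset α} (hR : UnionBound d R) {i : ι} (hi : d + 2 ≤ (R i).card)
    {x y : α} (hxy : x ≠ y) :
    UnionBound d (Function.update R i ((R i).erase x)) ∨
      UnionBound d (Function.update R i ((R i).erase y)) := by
  by_contra hcon
  rw [not_or] at hcon
  obtain ⟨A, U, hiA, hU, hAU, hxU⟩ := hR.exists_violation hcon.1
  obtain ⟨B, V, hiB, hV, hBV, hyV⟩ := hR.exists_violation hcon.2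
  have hRi : R i ⊆ U ∪ V := by
    intro z hz
    by_cases hzx : z = x
    · exact Finset.mem_union_right _ (hyV (Finset.mem_erase.2 ⟨hzx ▸ hxy, hz⟩))
    · exact Finset.mem_union_left _ (hxU (Finset.mem_erase.2 ⟨hzx, hz⟩))
  have hunion : d + (A ∪ B).card ≤ (U ∪ V).card := by
    refine (hR (A ∪ B) ⟨i, Finset.mem_union_left _ hiA⟩).trans (Finset.card_le_card ?_)
    refine Finset.biUnion_subset.2 fun j hj => ?_
    by_cases hji : j = i
    · exact hji ▸ hRi
    · rcases Finset.mem_union.1 hj with hj | hj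
      · exact (hAU j hj hji).trans Finset.subset_union_left
      · exact (hBV j hj hji).trans Finset.subset_union_right
  have hJ : ((A ∩ B).erase i).card + 1 = (A ∩ B).card :=
    Finset.card_erase_add_one (Finset.mem_inter.2 ⟨hiA, hiB⟩)
  have hinter : d + ((A ∩ B).erase i).card ≤ (U ∩ V).card := by
    rcases ((A ∩ B).erase i).eq_empty_or_nonempty with hempty | hne
    · -- The union over the empty index set gives nothing; `R i` minus two points has `d` elements.
      rw [hempty, Finset.card_empty]
      have hsub : ((R i).erase x).erase y ⊆ U ∩ V := by
        intro z hz
        simp only [Finset.mem_erase] at hz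
        exact Finset.mem_inter.2 ⟨hxU (Finset.mem_erase.2 ⟨hz.2.1, hz.2.2⟩),
          hyV (Finset.mem_erase.2 ⟨hz.1, hz.2.2⟩)⟩
      have h1 := Finset.card_le_card hsub
      have h2 := Finset.pred_card_le_card_erase (s := R i) (a := x)
      have h3 := Finset.pred_card_le_card_erase (s := (R i).erase x) (a := y)
      omega
    · refine (hR _ hne).trans (Finset.card_le_card ?_)
      refine Finset.biUnion_subset.2 fun j hj => ?_
      obtain ⟨hji, hjAB⟩ := Finset.mem_erase.1 hj
      obtain ⟨hjA, hjB⟩ := Finset.mem_inter.1 hjAB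
      exact Finset.subset_inter (hAU j hjA hji) (hBV j hjB hji)
  have h1 := Finset.card_union_add_card_inter U V
  have h2 := Finset.card_union_add_card_inter A B
  omega

/-- Every family with the union bound contains one with the same bound whose members all have the
least size `d + 1` that the bound allows. -/
lemma UnionBound.exists_shrink {ι α : Type*} [Finite ι] [Finite α] [DecidableEq α] {d : ℕ}
    {R : ι → Finset α} (hR : UnionBound d R) :
    ∃ S : ι → Finset α, S ≤ R ∧ UnionBound d S ∧ ∀ i, (S i).card = d + 1 := by
  classical
  obtain ⟨S, hSR, hS⟩ := (Set.toFinite {S : ι → Finset α | UnionBound d S}).exists_le_minimal hR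
  have hSb : UnionBound d S := hS.prop
  refine ⟨S, hSR, hSb, fun i => ?_⟩
  have hlow : d + 1 ≤ (S i).card := by
    simpa using hSb {i} (Finset.singleton_nonempty i)
  by_contra hne
  have hbig : d + 2 ≤ (S i).card := by omega
  obtain ⟨x, hx, y, hy, hxy⟩ := Finset.one_lt_card.1 (show 1 < (S i).card by omega)
  have hmin : ∀ z ∈ S i, ¬ UnionBound d (Function.update S i ((S i).erase z)) := by
    intro z hz hb
    have hle : Function.update S i ((S i).erase z) ≤ S :=
      update_le_self_iff.2 (Finset.erase_subset _ _)
    have hge := hS.le_of_le hb hle i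
    rw [Function.update_self] at hge
    exact Finset.notMem_erase z (S i) (hge hz)
  rcases hSb.erase_or_erase hbig hxy with h | h
  · exact hmin x hx h
  · exact hmin y hy h

/-- The Simplified GM-MDS Conjecture implies the GM-MDS Conjecture: if for every family
of `(k-1)`-subsets `Z i` with `|⋂_{i ∈ I} Z i| ≤ k - |I|` (nonempty `I`) there is an MDS
generator matrix vanishing on the positions prescribed by the `Z i`, then for every
family `R i` satisfying the MDS condition `|⋃_{i ∈ I} R i| ≥ n - k + |I|` there is an
MDS generator matrix vanishing outside the positions prescribed by the `R i`. -/
theorem gm_mds_of_simplified (n k : ℕ) (hk : 1 ≤ k) (hkn : k ≤ n)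
    (F : Type*) [Field F] [Fintype F]
    (hsimp : ∀ Z : Fin k → Finset (Fin n), (∀ i, (Z i).card = k - 1) →
      (∀ I : Finset (Fin k), I.Nonempty → (I.inf Z).card ≤ k - I.card) →
      ∃ G : Matrix (Fin k) (Fin n) F,
        (∀ i j, j ∈ Z i → G i j = 0) ∧
        (∀ s : Finset (Fin n), s.card = k →
          LinearIndependent F (fun j : s => (fun i : Fin k => G i (j : Fin n))))) :
    ∀ R : Fin k → Finset (Fin n),
      (∀ I : Finset (Fin k), I.Nonempty → n - k + I.card ≤ (I.biUnion R).card) →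
      ∃ G : Matrix (Fin k) (Fin n) F,
        (∀ i j, j ∉ R i → G i j = 0) ∧
        (∀ s : Finset (Fin n), s.card = k →
          LinearIndependent F (fun j : s => (fun i : Fin k => G i (j : Fin n)))) := by
  intro R hR
  obtain ⟨S, hSR, hS, hcard⟩ := UnionBound.exists_shrink (d := n - k) hR
  obtain ⟨G, hG, hind⟩ := hsimp (fun i => (S i)ᶜ)
    (fun i => by rw [Finset.card_compl, Fintype.card_fin, hcard]; omega)
    (fun I hI => by
      have hcompl : I.inf (fun i => (S i)ᶜ) = (I.biUnion S)ᶜ := by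
        ext j
        simp [Finset.mem_inf]
      have hb := hS I hI
      rw [hcompl, Finset.card_compl, Fintype.card_fin]
      omega)
  exact ⟨G, fun i j hj => hG i j (Finset.mem_compl.2 fun hjS => hj (hSR i hjS)), hind⟩
end

section
/- Let 1 ≤ k ≤ n and let Z_1,…,Z_k be (k−1)-element subsets of {1,…,n} such that |Z_i ∩ Z_{i′}| ≤ 1 for all i ≠ i′. Then the condition |⋂_{i∈I} Z_i| ≤ k − |I| for every nonempty subset I ⊆ {1,…,k} holds if and only if ⋂_{i=1}^{k} Z_i = ∅. -/
/-!
The forward direction is the case `I = univ`. Conversely, the bound at `I` follows by the size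
of `I`: a singleton gives `k - 1`, the full index set gives `0` by emptiness, and for
`2 ≤ |I| < k` the intersection lies in some `Z i ∩ Z i'` with `i ≠ i'`, so it has at most
`1 ≤ k - |I|` elements.
-/

/-- For `(k-1)`-subsets `Z 1, …, Z k` of `{1,…,n}` whose pairwise intersections have at
most one element, the condition `|⋂_{i ∈ I} Z i| ≤ k - |I|` for all nonempty `I` is
equivalent to `⋂_{i=1}^k Z i = ∅`. -/
theorem inter_cond_iff_total_inter_empty (n k : ℕ) (hk : 1 ≤ k) (hkn : k ≤ n)
    (Z : Fin k → Finset (Fin n)) (hZ : ∀ i, (Z i).card = k - 1)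
    (hpair : ∀ i i' : Fin k, i ≠ i' → (Z i ∩ Z i').card ≤ 1) :
    (∀ I : Finset (Fin k), I.Nonempty → (I.inf Z).card ≤ k - I.card) ↔
      Finset.univ.inf Z = ∅ := by
  constructor
  · intro h
    have := h Finset.univ ⟨⟨0, hk⟩, Finset.mem_univ _⟩
    simpa using this
  · intro h I hI
    by_cases hu : I = Finset.univ
    · simp [hu, h]
    have hlt : I.card < k := by
      simpa using Finset.card_lt_univ_of_notMem
        (Classical.not_forall.mp (fun hall => hu (Finset.eq_univ_iff_forall.mpr hall))).choose_spec
    by_cases h1 : 1 < I.card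
    · obtain ⟨i, hi, j, hj, hij⟩ := Finset.one_lt_card.mp h1
      have hsub : I.inf Z ⊆ Z i ∩ Z j :=
        Finset.subset_inter (Finset.inf_le hi) (Finset.inf_le hj)
      have := Finset.card_le_card hsub
      have := hpair i j hij
      omega
    · have hc : I.card = 1 := by
        have := hI.card_pos
        omega
      obtain ⟨i, rfl⟩ := Finset.card_eq_one.mp hc
      simp [hZ]
end

section
/- (The SMAN support matrix satisfies the MDS condition.) Let n, m ≥ 1, let A_1,…,A_m be subsets of {1,…,n}, let r_1,…,r_m be nonnegative integers, and let z be a nonnegative integer with 2z ≤ n. Suppose |⋃_{i∈I} A_i| ≥ ∑_{i∈I} r_i + 2z for every nonempty subset I ⊆ {1,…,m}. Set R = r_1 + ⋯ + r_m and k = n − 2z. Then R ≤ k; moreover, for any function g : {1,…,R} → {1,…,m} with |g^{−1}(s)| = r_s for every s, the family T_1,…,T_k of subsets of {1,…,n} defined by T_i = A_{g(i)} for 1 ≤ i ≤ R and T_i = {1,…,n} for R < i ≤ k satisfies the MDS condition: |⋃_{i∈I} T_i| ≥ n − k + |I| for every nonempty subset I ⊆ {1,…,k}. -/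
/-!
If `I` contains one of the appended full rows, the union is everything and the bound is
`(n - k) + |I| ≤ (n - k) + k = n`. Otherwise `I` comes from a set `J` of indices below `R`; each
source `s` accounts for at most `r s` of them, so `|I| = |J| ≤ ∑ s ∈ g(J), r s`, and the cut
condition applied to `g(J)` gives the claim because `n - k = 2z`. The inequality `R ≤ k` is the cut
condition for the set of all sources.
-/

/-- The SMAN support matrix satisfies the MDS condition: with `R = ∑ r s`, `k = n - 2z`,
one has `R ≤ k`, and the family obtained by expanding each row `A s` into `r s` identical
rows and appending `k - R` all-one rows satisfies the MDS condition. -/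
theorem sman_support_satisfies_mds (n m : ℕ) (hn : 1 ≤ n) (hm : 1 ≤ m)
    (A : Fin m → Finset (Fin n)) (r : Fin m → ℕ) (z : ℕ) (hz : 2 * z ≤ n)
    (hcut : ∀ I : Finset (Fin m), I.Nonempty →
      (∑ i ∈ I, r i) + 2 * z ≤ (I.biUnion A).card)
    (R k : ℕ) (hR : R = ∑ s, r s) (hk : k = n - 2 * z) :
    R ≤ k ∧
    ∀ g : Fin R → Fin m,
      (∀ s : Fin m, (Finset.univ.filter fun j => g j = s).card = r s) →
      ∀ T : Fin k → Finset (Fin n),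
        (∀ (i : Fin k) (h : (i : ℕ) < R), T i = A (g ⟨i, h⟩)) →
        (∀ i : Fin k, R ≤ (i : ℕ) → T i = Finset.univ) →
        ∀ I : Finset (Fin k), I.Nonempty → n - k + I.card ≤ (I.biUnion T).card := by
  have hRk : R ≤ k := by
    have h1 := hcut Finset.univ ⟨⟨0, hm⟩, Finset.mem_univ _⟩
    have h2 := Finset.card_le_univ (Finset.univ.biUnion A)
    rw [Fintype.card_fin] at h2
    omega
  refine ⟨hRk, fun g hg T hT hU I hI => ?_⟩
  by_cases hfull : ∃ i ∈ I, R ≤ (i : ℕ)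
  · obtain ⟨i, hiI, hi⟩ := hfull
    have h1 : (T i).card ≤ (I.biUnion T).card :=
      Finset.card_le_card (Finset.subset_biUnion_of_mem T hiI)
    rw [hU i hi, Finset.card_univ, Fintype.card_fin] at h1
    have h2 := Finset.card_le_univ I
    rw [Fintype.card_fin] at h2
    omega
  · push Not at hfull
    let J : Finset (Fin R) := Finset.univ.filter fun j => Fin.castLE hRk j ∈ I
    have hIJ : I ⊆ J.image (Fin.castLE hRk) := fun i hi =>
      Finset.mem_image.2 ⟨⟨i, hfull i hi⟩, Finset.mem_filter.2 ⟨Finset.mem_univ _, hi⟩, rfl⟩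
    have hcard : I.card ≤ J.card := (Finset.card_le_card hIJ).trans Finset.card_image_le
    have hJ : J.card ≤ ∑ s ∈ J.image g, r s := by
      rw [Finset.card_eq_sum_card_image g J]
      refine Finset.sum_le_sum fun s _ => ?_
      rw [← hg s]
      exact Finset.card_le_card (Finset.filter_subset_filter _ (Finset.subset_univ _))
    have hne : (J.image g).Nonempty := by
      rw [Finset.image_nonempty, ← Finset.card_pos]
      exact hI.card_pos.trans_le hcard
    have hsub : (J.image g).biUnion A ⊆ I.biUnion T := by
      rw [Finset.image_biUnion]
      refine Finset.biUnion_subset.2 fun j hj => ?_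
      have h1 := Finset.subset_biUnion_of_mem T (Finset.mem_filter.1 hj).2
      rwa [hT (Fin.castLE hRk j) j.isLt] at h1
    have h1 := hcut _ hne
    have h2 := Finset.card_le_card hsub
    omega
end

section
/- (Reduction of the Unique-Multiset property to ground sets of size at most k(k−1).) Fix k ≥ 1. Suppose that for every n ≤ k(k−1) and every family Z_1,…,Z_k of (k−1)-element subsets of {1,…,n} satisfying |⋂_{i∈I} Z_i| ≤ k − |I| for all nonempty I ⊆ {1,…,k}, there exists a choice whose value is unique among all choices. Then for every n ≥ 1 and every family Z_1,…,Z_k of (k−1)-element subsets of {1,…,n} satisfying |⋂_{i∈I} Z_i| ≤ k − |I| for all nonempty I ⊆ {1,…,k}, there exists a choice whose value is unique among all choices. -/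
/-- There exists a choice for `Z` whose value is unique among all choices. -/
def HasUniqueChoice (n k : ℕ) (Z : Fin k → Finset (Fin n)) : Prop :=
  ∃ (σ : Equiv.Perm (Fin k)) (S : Fin k → Finset (Fin n)),
    IsChoice n k Z σ S ∧
    ∀ (σ' : Equiv.Perm (Fin k)) (S' : Fin k → Finset (Fin n)),
      IsChoice n k Z σ' S' → choiceValue n k S' = choiceValue n k S →
        σ' = σ ∧ S' = S

theorem choiceValue_map {m n k : ℕ} (e : Fin m ↪ Fin n) (T : Fin k → Finset (Fin m)) :
    choiceValue n k (fun i => (T i).map e) = (choiceValue m k T).map e := by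
  simp only [choiceValue, Finset.map_val]
  exact (map_sum (Multiset.mapAddMonoidHom e) _ _).symm

theorem card_inf_le_of_map {m n k : ℕ} (e : Fin m ↪ Fin n) {W : Fin k → Finset (Fin m)}
    {Z : Fin k → Finset (Fin n)} (hW : ∀ i, (W i).map e = Z i) (I : Finset (Fin k)) :
    (I.inf W).card ≤ (I.inf Z).card := by
  rw [← Finset.card_map e]
  refine Finset.card_le_card (Finset.le_inf fun i hi => ?_)
  rw [← hW i]
  exact Finset.map_subset_map.2 (Finset.inf_le hi)

/-- An injection of ground sets transports choices with unique value: all choices for the image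
family are images of choices for the original family, and `e` acts injectively on values. -/
theorem HasUniqueChoice.of_map {m n k : ℕ} (e : Fin m ↪ Fin n) {W : Fin k → Finset (Fin m)}
    {Z : Fin k → Finset (Fin n)} (hW : ∀ i, (W i).map e = Z i) (h : HasUniqueChoice m k W) :
    HasUniqueChoice n k Z := by
  obtain ⟨σ, T, hT, huniq⟩ := h
  refine ⟨σ, fun i => (T i).map e, fun i => ⟨?_, ?_⟩, fun σ' S' hS' hval => ?_⟩
  · rw [← hW i]
    exact Finset.map_subset_map.2 (hT i).1
  · rw [Finset.card_map]
    exact (hT i).2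
  · have hex : ∀ i, ∃ T' ⊆ W i, S' i = T'.map e := fun i =>
      Finset.subset_map_iff.1 (by rw [hW i]; exact (hS' i).1)
    choose T' hsub hmap using hex
    obtain rfl : S' = fun i => (T' i).map e := funext hmap
    rw [choiceValue_map, choiceValue_map] at hval
    obtain ⟨h1, h2⟩ := huniq σ' T'
      (fun i => ⟨hsub i, by simpa using (hS' i).2⟩)
      (Multiset.map_injective e.injective hval)
    exact ⟨h1, by rw [h2]⟩

/-- To verify the Unique-Multiset Conjecture for a fixed `k`, it suffices to verify it
for all ground sets of size `n ≤ k (k - 1)`. -/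
theorem unique_multiset_reduction (k : ℕ) (hk : 1 ≤ k)
    (hsmall : ∀ n : ℕ, n ≤ k * (k - 1) → ∀ Z : Fin k → Finset (Fin n),
      (∀ i, (Z i).card = k - 1) →
      (∀ I : Finset (Fin k), I.Nonempty → (I.inf Z).card ≤ k - I.card) →
      HasUniqueChoice n k Z) :
    ∀ n : ℕ, 1 ≤ n → ∀ Z : Fin k → Finset (Fin n),
      (∀ i, (Z i).card = k - 1) →
      (∀ I : Finset (Fin k), I.Nonempty → (I.inf Z).card ≤ k - I.card) →
      HasUniqueChoice n k Z := by
  intro n _ Z hcard hinter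
  let U : Finset (Fin n) := Finset.univ.biUnion Z
  have hU : U.card ≤ k * (k - 1) := by
    simpa using Finset.card_biUnion_le_card_mul Finset.univ Z (k - 1) fun i _ => (hcard i).le
  let e : Fin U.card ↪ Fin n := (U.orderEmbOfFin rfl).toEmbedding
  have hex : ∀ i, ∃ W : Finset (Fin U.card), W.map e = Z i := by
    intro i
    have hrange : Z i ⊆ Finset.univ.map e := by
      have h : Finset.univ.map e = U := Finset.map_orderEmbOfFin_univ U rfl
      rw [h]
      exact Finset.subset_biUnion_of_mem Z (Finset.mem_univ i)
    obtain ⟨W, -, hW⟩ := Finset.subset_map_iff.1 hrange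
    exact ⟨W, hW.symm⟩
  choose W hW using hex
  refine HasUniqueChoice.of_map e hW (hsmall U.card hU W (fun i => ?_) fun I hI => ?_)
  · rw [← hcard i, ← hW i, Finset.card_map]
  · exact (card_inf_le_of_map e hW I).trans (hinter I hI)
end
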